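/- Let Ω ⊂ R^n be open and f ∈ W^{2,1}_loc(Ω). Then there exists an increasing sequence of closed sets C_k ⊂ C_{k+1} ⊂ Ω such that f* restricted to C_k is Lipschitz continuous outside a set of 1-capacity zero, and H^{n-1}(Ω \ ∪_k C_k) = 0. -/

import Mathlib

open MeasureTheory Metric Filter Set
open scoped ENNReal Topology NNReal

noncomputable section

/-- Euclidean space ℝⁿ. -/
abbrev En (n : ℕ) := EuclideanSpace ℝ (Fin n)

variable {n : ℕ}

/-- The average of `f` over the ball `B(x,r)`. -/
def ballAvg (f : En n → ℝ) (x : En n) (r : ℝ) : ℝ :=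
  ⨍ y in Metric.ball x r, f y

open scoped Classical in
/-- The precise representative of `f`: the limit of ball averages where it exists, `0` otherwise. -/
def preciseRep (f : En n → ℝ) (x : En n) : ℝ :=
  if h : ∃ L : ℝ, Tendsto (fun r => ballAvg f x r) (nhdsWithin 0 (Set.Ioi 0)) (nhds L)
  then h.choose else 0

/-- A test function: smooth, compactly supported, with support inside `Ω`. -/
def IsTest (Ω : Set (En n)) (η : En n → ℝ) : Prop :=
  ContDiff ℝ (⊤ : ℕ∞) η ∧ HasCompactSupport η ∧ tsupport η ⊆ Ω

/-- `g` is the weak partial derivative of `f` in direction `v`, on `Ω`. -/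
def HasWeakPartialOn (Ω : Set (En n)) (f g : En n → ℝ) (v : En n) : Prop :=
  ∀ η : En n → ℝ, IsTest Ω η →
    ∫ x, f x * fderiv ℝ η x v = - ∫ x, g x * η x

/-- `g` is the weak gradient of `f` on `Ω`. -/
def HasWeakGradientOn (Ω : Set (En n)) (f : En n → ℝ) (g : En n → En n) : Prop :=
  ∀ i : Fin n, HasWeakPartialOn Ω f (fun x => g x i) (EuclideanSpace.single i 1)

/-- `f ∈ W^{1,p}(ℝⁿ)` with weak gradient `g`. -/
def MemW1p (p : ℝ) (f : En n → ℝ) (g : En n → En n) : Prop :=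
  AEStronglyMeasurable f volume ∧ AEStronglyMeasurable g volume ∧
  HasWeakGradientOn Set.univ f g ∧
  Integrable (fun x => |f x| ^ p) ∧ Integrable (fun x => ‖g x‖ ^ p)

/-- `f ∈ W^{1,p}_loc(Ω)` with weak gradient `g`. -/
def MemW1pLoc (p : ℝ) (Ω : Set (En n)) (f : En n → ℝ) (g : En n → En n) : Prop :=
  AEStronglyMeasurable f volume ∧ AEStronglyMeasurable g volume ∧
  HasWeakGradientOn Ω f g ∧
  ∀ K : Set (En n), K ⊆ Ω → IsCompact K →
    IntegrableOn (fun x => |f x| ^ p) K ∧ IntegrableOn (fun x => ‖g x‖ ^ p) K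

/-- `f ∈ W^{2,p}_loc(Ω)` with weak gradient `g` and weak second derivatives `h`. -/
def MemW2pLoc (p : ℝ) (Ω : Set (En n)) (f : En n → ℝ)
    (g : En n → En n) (h : En n → Fin n → En n) : Prop :=
  AEStronglyMeasurable f volume ∧ AEStronglyMeasurable g volume ∧
  HasWeakGradientOn Ω f g ∧
  (∀ i : Fin n, HasWeakGradientOn Ω (fun x => g x i) (fun x => h x i)) ∧
  ∀ K : Set (En n), K ⊆ Ω → IsCompact K →
    IntegrableOn (fun x => |f x| ^ p) K ∧ IntegrableOn (fun x => ‖g x‖ ^ p) K ∧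
    ∀ i : Fin n, IntegrableOn (fun x => ‖h x i‖ ^ p) K

/-- `f ∈ W^{2,p}(ℝⁿ)` with weak gradient `g` and weak second derivatives `h`. -/
def MemW2p (p : ℝ) (f : En n → ℝ) (g : En n → En n) (h : En n → Fin n → En n) : Prop :=
  AEStronglyMeasurable f volume ∧ AEStronglyMeasurable g volume ∧
  HasWeakGradientOn Set.univ f g ∧
  (∀ i : Fin n, HasWeakGradientOn Set.univ (fun x => g x i) (fun x => h x i)) ∧
  Integrable (fun x => |f x| ^ p) ∧ Integrable (fun x => ‖g x‖ ^ p) ∧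
  ∀ i : Fin n, Integrable (fun x => ‖h x i‖ ^ p)

/-- The `p`-capacity of a compact set. -/
def capK (p : ℝ) (F : Set (En n)) : ℝ≥0∞ :=
  ⨅ (g : En n → ℝ) (_ : ContDiff ℝ (⊤ : ℕ∞) g ∧ HasCompactSupport g ∧ ∀ x ∈ F, 1 ≤ g x),
    ∫⁻ x, (‖fderiv ℝ g x‖₊ : ℝ≥0∞) ^ p

/-- The `p`-capacity of an open set, by inner regularity over compact subsets. -/
def capOpen (p : ℝ) (U : Set (En n)) : ℝ≥0∞ :=
  ⨆ (F : Set (En n)) (_ : F ⊆ U ∧ IsCompact F), capK p F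

/-- The `p`-capacity of an arbitrary set, by outer regularity over open supersets. -/
def cap (p : ℝ) (E : Set (En n)) : ℝ≥0∞ :=
  ⨅ (U : Set (En n)) (_ : E ⊆ U ∧ IsOpen U), capOpen p U

/-- `f` restricted to `s` is Lipschitz outside a subset of `s` of `p`-capacity zero. -/
def LipschitzOnQE (p : ℝ) (f : En n → ℝ) (s : Set (En n)) : Prop :=
  ∃ N : Set (En n), N ⊆ s ∧ cap p N = 0 ∧ ∃ K : ℝ≥0, LipschitzOnWith K f (s \ N)

/-- The multiplicity function: the number of preimages of `y` in `A` under `φ`. -/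
def Nphi (φ : En n → En n) (A : Set (En n)) (y : En n) : ℝ≥0∞ :=
  Measure.count {x ∈ A | φ x = y}

end

lemma lint_scale {n : ℕ} (H : En n → ℝ≥0∞) (hH : Measurable H) (a : ℝ) (ha : 1/2 ≤ a) (ha1 : a ≤ 1)
    (x q : En n) (r : ℝ) (hq : q ∈ ball x r) :
    ∫⁻ z in ball x r, H ((1 - a) • q + a • z) ≤ 2 ^ n * ∫⁻ p in ball x r, H p := by
  have ha0 : a ≠ 0 := by linarith
  have h1 : ∫⁻ z in ball x r, H ((1 - a) • q + a • z) ≤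
      ∫⁻ z, (ball x r).indicator H ((1 - a) • q + a • z) := by
    rw [← lintegral_indicator measurableSet_ball]
    apply lintegral_mono
    intro z
    by_cases hz : z ∈ ball x r
    · have : (1 - a) • q + a • z ∈ ball x r :=
        (convex_ball x r) hq hz (by linarith) (by linarith) (by ring)
      simp [indicator_of_mem hz, indicator_of_mem this]
    · simp [indicator_of_notMem hz]
  refine h1.trans ?_
  have hI : Measurable ((ball x r).indicator H) := hH.indicator measurableSet_ball
  have h2 : ∫⁻ z, (ball x r).indicator H ((1 - a) • q + a • z) =
      ∫⁻ z, (fun y => (ball x r).indicator H ((1 - a) • q + y)) z ∂(Measure.map (a • ·) volume) := by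
    rw [lintegral_map (by fun_prop) (by fun_prop)]
  rw [h2, Measure.map_addHaar_smul _ ha0, lintegral_smul_measure,
    lintegral_add_left_eq_self (μ := volume) ((ball x r).indicator H), lintegral_indicator measurableSet_ball]
  simp only [smul_eq_mul]
  gcongr
  rw [finrank_euclideanSpace_fin, abs_of_pos (by positivity)]
  rw [show (2:ℝ≥0∞)^n = ENNReal.ofReal (2^n) by
    rw [ENNReal.ofReal_pow (by norm_num)]; norm_num]
  apply ENNReal.ofReal_le_ofReal
  rw [← inv_pow]
  have : a⁻¹ ≤ 2 := by
    rw [inv_le_comm₀ (by linarith) (by norm_num)]; linarith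
  exact pow_le_pow_left₀ (by positivity) this n

lemma ftc_bound {n : ℕ} (v : En n → ℝ) (hv : ContDiff ℝ 1 v) (x y z : En n) (r : ℝ)
    (hy : y ∈ ball x r) (hz : z ∈ ball x r) :
    ‖v y - v z‖ₑ ≤ ENNReal.ofReal (2 * r) *
      ∫⁻ s in Icc (0:ℝ) 1, ‖fderiv ℝ v ((1 - s) • z + s • y)‖ₑ := by
  have hd : ∀ s : ℝ, HasDerivAt (fun s : ℝ => v ((1 - s) • z + s • y))
      (fderiv ℝ v ((1 - s) • z + s • y) (y - z)) s := by
    intro s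
    have h1 : HasDerivAt (fun s : ℝ => (1 - s) • z + s • y) (y - z) s := by
      refine ((((hasDerivAt_id s).const_sub 1).smul_const z).fun_add
        ((hasDerivAt_id s).smul_const y)).congr_deriv ?_
      rw [neg_one_smul, one_smul, neg_add_eq_sub]
    exact ((hv.differentiable (by norm_num)) _).hasFDerivAt.comp_hasDerivAt s h1
  have hcf : Continuous (fun s : ℝ => fderiv ℝ v ((1 - s) • z + s • y)) :=
    (hv.continuous_fderiv (by norm_num)).comp (by fun_prop)
  have hc : Continuous (fun s : ℝ => fderiv ℝ v ((1 - s) • z + s • y) (y - z)) := by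
    fun_prop
  have hI := intervalIntegral.integral_eq_sub_of_hasDerivAt (a := 0) (b := 1)
    (fun s _ => hd s) (hc.intervalIntegrable 0 1)
  simp [-map_sub] at hI
  rw [← hI, intervalIntegral.integral_of_le zero_le_one, ← lintegral_const_mul' _ _ ENNReal.ofReal_ne_top]
  refine (enorm_integral_le_lintegral_enorm _).trans ?_
  rw [restrict_Ioc_eq_restrict_Icc]
  apply lintegral_mono
  intro s
  simp only
  rw [mul_comm, ← ofReal_norm, ← ofReal_norm, ← ENNReal.ofReal_mul (by positivity)]
  apply ENNReal.ofReal_le_ofReal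
  refine (ContinuousLinearMap.le_opNorm _ _).trans ?_
  gcongr
  rw [← dist_eq_norm]
  have := dist_triangle_right y z x
  rw [mem_ball] at hy hz
  linarith

theorem poincare_C1 {n : ℕ} (v : En n → ℝ) (hv : ContDiff ℝ 1 v) (x : En n) (r : ℝ) :
    ∫⁻ y in ball x r, ∫⁻ z in ball x r, ‖v y - v z‖ₑ ≤
      ENNReal.ofReal (2 * r) * 2 ^ n * volume (ball x r) * ∫⁻ p in ball x r, ‖fderiv ℝ v p‖ₑ := by
  set H : En n → ℝ≥0∞ := fun p => ‖fderiv ℝ v p‖ₑ with hHdef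
  have hHc : Continuous H := (hv.continuous_fderiv (by norm_num)).enorm
  have hHm : Measurable H := hHc.measurable
  set B := ball x r
  calc ∫⁻ y in B, ∫⁻ z in B, ‖v y - v z‖ₑ
      ≤ ∫⁻ y in B, ∫⁻ z in B, ENNReal.ofReal (2 * r) *
          ∫⁻ s in Icc (0:ℝ) 1, H ((1 - s) • z + s • y) := by
        apply setLIntegral_mono' measurableSet_ball
        intro y hy
        apply setLIntegral_mono' measurableSet_ball
        intro z hz
        exact ftc_bound v hv x y z r hy hz
    _ = ENNReal.ofReal (2 * r) * ∫⁻ y in B, ∫⁻ z in B,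
          ∫⁻ s in Icc (0:ℝ) 1, H ((1 - s) • z + s • y) := by
        rw [← lintegral_const_mul' _ _ ENNReal.ofReal_ne_top]
        congr 1; ext y
        rw [← lintegral_const_mul' _ _ ENNReal.ofReal_ne_top]
    _ = ENNReal.ofReal (2 * r) * ∫⁻ s in Icc (0:ℝ) 1, ∫⁻ y in B, ∫⁻ z in B,
          H ((1 - s) • z + s • y) := by
        congr 1
        rw [lintegral_lintegral_swap (μ := volume.restrict (Icc (0:ℝ) 1))]
        · congr 1; ext y
          rw [lintegral_lintegral_swap]
          apply Measurable.aemeasurable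
          apply hHm.comp
          fun_prop
        · apply Measurable.aemeasurable
          apply Measurable.lintegral_prod_right'
            (f := fun q : (ℝ × En n) × En n => H ((1 - q.1.1) • q.2 + q.1.1 • q.1.2))
          apply hHm.comp
          fun_prop
    _ ≤ ENNReal.ofReal (2 * r) * ∫⁻ s in Icc (0:ℝ) 1,
          (volume B * (2 ^ n * ∫⁻ p in B, H p)) := by
        gcongr 1
        apply setLIntegral_mono' measurableSet_Icc
        intro s hs
        by_cases h : s ≤ 1/2
        · calc ∫⁻ y in B, ∫⁻ z in B, H ((1 - s) • z + s • y)
              ≤ ∫⁻ y in B, 2 ^ n * ∫⁻ p in B, H p := by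
                apply setLIntegral_mono' measurableSet_ball
                intro y hy
                have := lint_scale H hHm (1 - s) (by linarith) (by linarith [hs.1]) x y r hy
                simpa [add_comm] using this
            _ = _ := by rw [setLIntegral_const, mul_comm]
        · rw [lintegral_lintegral_swap]
          · refine (setLIntegral_mono' (g := fun _ => 2 ^ n * ∫⁻ p in B, H p)
              measurableSet_ball fun y hy => ?_).trans ?_
            · exact lint_scale H hHm s (by linarith) (by linarith [hs.2]) x y r hy
            · rw [setLIntegral_const, mul_comm]
          · apply Measurable.aemeasurable
            apply hHm.comp
            fun_prop
    _ = _ := by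
        rw [setLIntegral_const]
        simp
        ring

noncomputable def hcont (n : ℕ) : OuterMeasure (En n) :=
  OuterMeasure.boundedBy (fun s => (ediam s) ^ ((n:ℝ) - 1))

lemma hcont_le {n : ℕ} (s : Set (En n)) : hcont n s ≤ (ediam s) ^ ((n:ℝ) - 1) :=
  OuterMeasure.boundedBy_le s

lemma hcont_null {n : ℕ} (hn : 1 ≤ n) (E : Set (En n)) (hE : hcont n E = 0) :
    μH[(n:ℝ) - 1] E = 0 := by
  have hd : (0:ℝ) ≤ (n:ℝ) - 1 := by
    have : (1:ℝ) ≤ n := by exact_mod_cast hn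
    linarith
  rw [Measure.hausdorffMeasure_apply]
  rw [← nonpos_iff_eq_zero]
  refine iSup₂_le fun r hr => ?_
  rw [nonpos_iff_eq_zero]
  by_contra hne
  set X := ⨅ (t : ℕ → Set (En n)) (_ : E ⊆ ⋃ n, t n) (_ : ∀ n, ediam (t n) ≤ r),
    ∑' k, ⨆ _ : (t k).Nonempty, ediam (t k) ^ ((n:ℝ) - 1) with hX
  have hXpos : 0 < X := pos_iff_ne_zero.2 hne
  have hrd : 0 < r ^ ((n:ℝ) - 1) := by
    by_cases h : r = ∞
    · subst h
      rcases hd.eq_or_lt with h0 | h0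
      · rw [← h0]; simp
      · rw [ENNReal.top_rpow_of_pos h0]; simp
    · exact ENNReal.rpow_pos hr h
  have hlt : hcont n E < min X (r ^ ((n:ℝ) - 1)) := by
    rw [hE]; exact lt_min hXpos hrd
  rw [hcont, OuterMeasure.boundedBy_apply] at hlt
  simp only [iInf_lt_iff] at hlt
  obtain ⟨t, ht, hsum⟩ := hlt
  have hdiam : ∀ k, ediam (t k) ≤ r := by
    intro k
    rcases (t k).eq_empty_or_nonempty with h | h
    · rw [h]; simp
    · by_contra hlt
      push Not at hlt
      have h1 : r ^ ((n:ℝ) - 1) ≤ ediam (t k) ^ ((n:ℝ) - 1) := ENNReal.rpow_le_rpow hlt.le hd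
      have h2 : ediam (t k) ^ ((n:ℝ) - 1) ≤ ∑' k, ⨆ _ : (t k).Nonempty, ediam (t k) ^ ((n:ℝ) - 1) := by
        refine le_trans ?_ (ENNReal.le_tsum k)
        exact le_iSup_of_le h le_rfl
      exact absurd (lt_of_lt_of_le hsum (min_le_right _ _)) (not_lt.2 (h1.trans h2))
  have : X ≤ ∑' k, ⨆ _ : (t k).Nonempty, ediam (t k) ^ ((n:ℝ) - 1) :=
    iInf_le_of_le t (iInf_le_of_le ht (iInf_le_of_le hdiam le_rfl))
  exact absurd (lt_of_lt_of_le hsum (min_le_left _ _)) (not_lt.2 this)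

lemma weight_aux (D V : ℝ≥0∞) (L : ℝ) (hDt : D ≠ ∞) (hVt : V ≠ ∞) (hL : D < ENNReal.ofReal L) :
    ∃ s : ℝ, 0 < s ∧ D + ENNReal.ofReal s * V ≤ ENNReal.ofReal L := by
  lift D to ℝ≥0 using hDt
  lift V to ℝ≥0 using hVt
  have hDr : (D:ℝ) < L := (ENNReal.lt_ofReal_iff_toReal_lt ENNReal.coe_ne_top).1 hL
  have hV0 : 0 ≤ (V:ℝ) := V.2
  have hD0 : 0 ≤ (D:ℝ) := D.2
  have hs : 0 < (L - D) / ((V:ℝ) + 1) := by apply div_pos <;> linarith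
  refine ⟨(L - D) / (V + 1), hs, ?_⟩
  rw [← ENNReal.ofReal_coe_nnreal, ← ENNReal.ofReal_coe_nnreal (p := V),
    ← ENNReal.ofReal_mul hs.le, ← ENNReal.ofReal_add hD0 (by positivity)]
  apply ENNReal.ofReal_le_ofReal
  have : (L - D) / ((V:ℝ) + 1) * V ≤ L - D := by
    rw [div_mul_eq_mul_div, div_le_iff₀ (by linarith)]
    nlinarith
  linarith

lemma cutoff1D : ∃ C0 : ℝ, 0 < C0 ∧ ∀ t ε : ℝ, 0 < t → 0 < ε → ∃ F : ℝ → ℝ,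
    ContDiff ℝ 1 F ∧ (∀ s, 0 ≤ F s ∧ F s ≤ 1) ∧ (∀ s, |s| ≤ t → F s = 0) ∧
    (∀ s, t + ε ≤ |s| → F s = 1) ∧ (∀ s, |deriv F s| ≤ C0 / ε) ∧
    (∀ s, ¬ (t < |s| ∧ |s| < t + ε) → deriv F s = 0) := by
  have hS : ContDiff ℝ 1 Real.smoothTransition := Real.smoothTransition.contDiff
  have hSd : Continuous (deriv Real.smoothTransition) := hS.continuous_deriv (by norm_num)
  obtain ⟨C, hC⟩ := (isCompact_Icc (a := (0:ℝ)) (b := 1)).exists_bound_of_continuousOn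
    hSd.continuousOn
  have hz0 : ∀ s : ℝ, s ≤ 0 → deriv Real.smoothTransition s = 0 := by
    intro s hs
    apply IsLocalMin.deriv_eq_zero
    apply Filter.Eventually.of_forall
    intro y
    rw [Real.smoothTransition.zero_of_nonpos hs]
    exact Real.smoothTransition.nonneg y
  have hz1 : ∀ s : ℝ, 1 ≤ s → deriv Real.smoothTransition s = 0 := by
    intro s hs
    apply IsLocalMax.deriv_eq_zero
    apply Filter.Eventually.of_forall
    intro y
    rw [Real.smoothTransition.one_of_one_le hs]
    exact Real.smoothTransition.le_one y
  have hCb : ∀ s, |deriv Real.smoothTransition s| ≤ |C| := by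
    intro s
    by_cases h : s ∈ Icc (0:ℝ) 1
    · exact (hC s h).trans (le_abs_self C)
    · have : deriv Real.smoothTransition s = 0 := by
        rw [mem_Icc, not_and_or] at h
        rcases h with h | h
        · exact hz0 s (by linarith)
        · exact hz1 s (by linarith)
      rw [this]; simp
  refine ⟨2 * |C| + 1, by positivity, fun t ε ht hε => ?_⟩
  set F : ℝ → ℝ := fun s => Real.smoothTransition ((s - t) / ε) + Real.smoothTransition ((-s - t) / ε)
    with hF
  have hFc : ContDiff ℝ 1 F := by
    apply ContDiff.add
    · exact hS.comp (by fun_prop)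
    · exact hS.comp (by fun_prop)
  have hb : ∀ s, 0 ≤ F s ∧ F s ≤ 1 := by
    intro s
    refine ⟨add_nonneg (Real.smoothTransition.nonneg _) (Real.smoothTransition.nonneg _), ?_⟩
    simp only [hF]
    rcases le_total 0 s with h | h
    · rw [Real.smoothTransition.zero_of_nonpos (x := (-s - t)/ε)
        (div_nonpos_of_nonpos_of_nonneg (by linarith) hε.le), add_zero]
      exact Real.smoothTransition.le_one _
    · rw [Real.smoothTransition.zero_of_nonpos (x := (s - t)/ε)
        (div_nonpos_of_nonpos_of_nonneg (by linarith) hε.le), zero_add]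
      exact Real.smoothTransition.le_one _
  have h0 : ∀ s, |s| ≤ t → F s = 0 := by
    intro s hs
    rw [abs_le] at hs
    simp only [hF]
    rw [Real.smoothTransition.zero_of_nonpos (x := (-s - t)/ε)
        (div_nonpos_of_nonpos_of_nonneg (by linarith) hε.le),
      Real.smoothTransition.zero_of_nonpos (x := (s - t)/ε)
        (div_nonpos_of_nonpos_of_nonneg (by linarith) hε.le), add_zero]
  have h1 : ∀ s, t + ε ≤ |s| → F s = 1 := by
    intro s hs
    apply le_antisymm (hb s).2
    simp only [hF]
    rcases le_abs.1 hs with h | h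
    · rw [Real.smoothTransition.one_of_one_le (x := (s - t)/ε) (by rw [le_div_iff₀ hε]; linarith)]
      linarith [Real.smoothTransition.nonneg ((-s - t)/ε)]
    · rw [Real.smoothTransition.one_of_one_le (x := (-s - t)/ε) (by rw [le_div_iff₀ hε]; linarith)]
      linarith [Real.smoothTransition.nonneg ((s - t)/ε)]
  refine ⟨F, hFc, hb, h0, h1, ?_, ?_⟩
  · intro s
    have hSdiff : Differentiable ℝ Real.smoothTransition := hS.differentiable (by norm_num)
    have e1 : HasDerivAt (fun s : ℝ => (s - t) / ε) (1 / ε) s :=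
      ((hasDerivAt_id s).sub_const t).div_const ε
    have e2 : HasDerivAt (fun s : ℝ => (-s - t) / ε) (-1 / ε) s :=
      ((hasDerivAt_id s).neg.sub_const t).div_const ε
    have hd : HasDerivAt F _ s := ((hSdiff _).hasDerivAt.comp s e1).add
      ((hSdiff _).hasDerivAt.comp s e2)
    rw [hd.deriv]
    refine (abs_add_le _ _).trans ?_
    rw [abs_mul, abs_mul, abs_div, abs_div, abs_neg, abs_one, abs_of_pos hε]
    have a1 := hCb ((s - t) / ε)
    have a2 := hCb ((-s - t) / ε)
    rw [← add_mul, mul_one_div]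
    apply div_le_div_of_nonneg_right _ hε.le
    linarith
  · intro s hs
    by_cases h : |s| ≤ t
    · apply IsLocalMin.deriv_eq_zero
      apply Filter.Eventually.of_forall
      intro y
      rw [h0 s h]; exact (hb y).1
    · apply IsLocalMax.deriv_eq_zero
      apply Filter.Eventually.of_forall
      intro y
      rw [h1 s (by by_contra h'; exact hs ⟨by linarith, by linarith⟩)]; exact (hb y).2

lemma exists_cut {n : ℕ} : ∃ C0 : ℝ, 0 < C0 ∧ ∀ (v : En n → ℝ) (_ : ContDiff ℝ 1 v)
    (_ : HasCompactSupport v) (T L τ : ℝ) (_ : 0 < T) (_ : 0 < τ)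
    (_ : ∫⁻ z, ‖fderiv ℝ v z‖ₑ < ENNReal.ofReal L),
    ∃ w : En n → ℝ, ContDiff ℝ 1 w ∧ (∀ z, w z ≠ 1 → |v z| ≤ 2 * T) ∧
      (∀ z, v z = 0 → w z = 0) ∧
      volume {z | w z ≠ 0 ∧ w z ≠ 1} ≤ ENNReal.ofReal τ ∧
      ∫⁻ z, ‖fderiv ℝ w z‖ₑ ≤ ENNReal.ofReal (C0 * L / T) := by
  obtain ⟨C0, hC0, hcut⟩ := cutoff1D
  refine ⟨C0, hC0, fun v hv hvc T L τ hT hτ hL => ?_⟩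
  have hLpos : 0 < L := ENNReal.ofReal_pos.1 (lt_of_le_of_lt zero_le hL)
  set D := ∫⁻ z, ‖fderiv ℝ v z‖ₑ with hD
  set V := volume (tsupport v) with hV
  have hVt : V ≠ ∞ := hvc.isCompact.measure_lt_top.ne
  have hDt : D ≠ ∞ := (hL.trans ENNReal.ofReal_lt_top).ne
  have hcont : Continuous v := hv.continuous
  have hfd : Continuous (fderiv ℝ v) := hv.continuous_fderiv (by norm_num)
  -- weight
  obtain ⟨s, hs, hsL⟩ : ∃ s : ℝ, 0 < s ∧ D + ENNReal.ofReal s * V ≤ ENNReal.ofReal L := by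
    exact weight_aux D V L hDt hVt hL
  set m : Measure (En n) := volume.withDensity (fun z => ‖fderiv ℝ v z‖ₑ) +
    ENNReal.ofReal s • volume.restrict (tsupport v) with hm
  have hmu : m univ ≤ ENNReal.ofReal L := by
    simp only [hm, Measure.add_apply, Measure.smul_apply, smul_eq_mul,
      withDensity_apply _ MeasurableSet.univ, Measure.restrict_univ,
      Measure.restrict_apply MeasurableSet.univ, univ_inter]
    exact hsL
  obtain ⟨N0, hN0⟩ := exists_nat_gt (L / s / τ)
  set N := N0 + 1 with hN
  have hNpos : (0:ℝ) < N := by positivity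
  set ε := T / N with hε
  have hεpos : 0 < ε := by positivity
  set P : ℕ → Set (En n) := fun i => {z | T + i * ε < |v z| ∧ |v z| < T + i * ε + ε} with hP
  have hPm : ∀ i, MeasurableSet (P i) := by
    intro i
    apply IsOpen.measurableSet
    exact (isOpen_lt continuous_const hcont.abs).inter (isOpen_lt hcont.abs continuous_const)
  have hPd : ∀ i j, i < j → Disjoint (P i) (P j) := by
    intro i j hij
    rw [Set.disjoint_left]
    intro z hz hz'
    have h1 := hz.2
    have h2 := hz'.1
    have : (i:ℝ) + 1 ≤ j := by exact_mod_cast hij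
    nlinarith
  have hPsum : ∑ i ∈ Finset.range N, m (P i) ≤ ∑ i ∈ Finset.range N, ENNReal.ofReal (L / N) := by
    rw [← measure_biUnion_finset]
    · refine (measure_mono (subset_univ _)).trans (hmu.trans ?_)
      rw [Finset.sum_const, Finset.card_range, nsmul_eq_mul, ← ENNReal.ofReal_natCast,
        ← ENNReal.ofReal_mul hNpos.le]
      apply ENNReal.ofReal_le_ofReal
      rw [mul_div_cancel₀ _ hNpos.ne']
    · intro i _ j _ hij
      rcases lt_or_gt_of_ne hij with h | h
      · exact hPd i j h
      · exact (hPd j i h).symm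
    · exact fun i _ => hPm i
  obtain ⟨i, hiN, hi⟩ : ∃ i ∈ Finset.range N, m (P i) ≤ ENNReal.ofReal (L / N) := by
    by_contra hcon
    push Not at hcon
    exact absurd hPsum (not_le.2 (ENNReal.sum_lt_sum_of_nonempty
      (Finset.nonempty_range_iff.2 (by omega)) hcon))
  have hiN' : (i:ℝ) + 1 ≤ N := by exact_mod_cast (Finset.mem_range.1 hiN)
  set t := T + i * ε with ht
  have htpos : 0 < t := by positivity
  have htT : t + ε ≤ 2 * T := by
    have : (i + 1) * ε ≤ N * ε := by gcongr
    have h2 : N * ε = T := by rw [hε]; field_simp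
    rw [ht]; nlinarith
  have hsub : P i ⊆ tsupport v := by
    intro z hz
    apply subset_tsupport
    intro h0
    have := hz.1
    rw [h0, abs_zero] at this
    exact absurd this (not_lt.2 htpos.le)
  have hmP : m (P i) = (∫⁻ z in P i, ‖fderiv ℝ v z‖ₑ) + ENNReal.ofReal s * volume (P i) := by
    simp only [hm, Measure.add_apply, Measure.smul_apply, smul_eq_mul,
      withDensity_apply _ (hPm i), Measure.restrict_apply (hPm i), inter_eq_left.2 hsub]
  obtain ⟨F, hFc, hFb, hF0, hF1, hFd, hFd0⟩ := hcut t ε htpos hεpos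
  refine ⟨F ∘ v, hFc.comp hv, ?_, ?_, ?_, ?_⟩
  · intro z hz
    by_contra h
    exact hz (hF1 _ (by linarith))
  · intro z hz
    simp only [Function.comp, hz]
    exact hF0 0 (by simpa using htpos.le)
  · have hss : {z | (F ∘ v) z ≠ 0 ∧ (F ∘ v) z ≠ 1} ⊆ P i := by
      rintro z ⟨h0, h1⟩
      constructor
      · by_contra h; exact h0 (hF0 _ (by linarith))
      · by_contra h; exact h1 (hF1 _ (by linarith))
    refine (measure_mono hss).trans ?_
    have h1 : ENNReal.ofReal s * volume (P i) ≤ ENNReal.ofReal (s * τ) := by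
      refine le_trans (le_trans (self_le_add_left _ _) (hmP ▸ hi)) ?_
      apply ENNReal.ofReal_le_ofReal
      rw [div_div, div_lt_iff₀ (by positivity)] at hN0
      rw [div_le_iff₀ hNpos, hN]; push_cast
      nlinarith [mul_pos hs hτ]
    rw [ENNReal.ofReal_mul hs.le] at h1
    exact (ENNReal.mul_le_mul_iff_right (ENNReal.ofReal_pos.2 hs).ne' ENNReal.ofReal_ne_top).1 h1
  · have hpt : ∀ z, ‖fderiv ℝ (F ∘ v) z‖ₑ ≤ (P i).indicator
        (fun z => ENNReal.ofReal (C0 / ε) * ‖fderiv ℝ v z‖ₑ) z := by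
      intro z
      have hd : fderiv ℝ (F ∘ v) z = deriv F (v z) • fderiv ℝ v z := by
        have h1 := (hFc.differentiable (by norm_num) (v z)).hasDerivAt.comp_hasFDerivAt z
          (hv.differentiable (by norm_num) z).hasFDerivAt
        exact h1.fderiv
      rw [hd]
      by_cases hz : z ∈ P i
      · rw [indicator_of_mem hz, enorm_smul]
        gcongr
        rw [← ofReal_norm]
        exact ENNReal.ofReal_le_ofReal (hFd _)
      · rw [hFd0 (v z) hz, enorm_smul, enorm_zero, zero_mul]; exact zero_le
    refine (lintegral_mono hpt).trans ?_
    rw [lintegral_indicator (hPm i), lintegral_const_mul' _ _ ENNReal.ofReal_ne_top]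
    have h1 : ∫⁻ z in P i, ‖fderiv ℝ v z‖ₑ ≤ ENNReal.ofReal (L / N) :=
      le_trans (le_self_add) (hmP ▸ hi)
    refine (mul_le_mul_right h1 _).trans ?_
    rw [← ENNReal.ofReal_mul (by positivity)]
    apply ENNReal.ofReal_le_ofReal
    rw [hε]
    apply le_of_eq
    field_simp

lemma vol_ball_eq {n : ℕ} (x : En n) {r : ℝ} (hr : 0 < r) :
    volume (ball x r) = ENNReal.ofReal (r ^ n) * volume (ball (0 : En n) 1) := by
  rw [Measure.addHaar_ball_of_pos _ _ hr, finrank_euclideanSpace_fin]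

lemma ball_gain {n : ℕ} (hn : 1 ≤ n) (u : En n → ℝ) (hu : ContDiff ℝ 1 u) (x : En n) (r : ℝ)
    (hr : 0 < r) (κ : ℝ≥0∞)
    (h : κ * (volume (ball x r) * volume (ball x r)) ≤
      ∫⁻ y in ball x r, ∫⁻ z in ball x r, ‖u y - u z‖ₑ) :
    κ * (volume (ball (0 : En n) 1) * ENNReal.ofReal (r ^ (n - 1))) ≤
      2 ^ (n + 1) * ∫⁻ p in ball x r, ‖fderiv ℝ u p‖ₑ := by
  have h1 := h.trans (poincare_C1 u hu x r)
  set I := ∫⁻ p in ball x r, ‖fderiv ℝ u p‖ₑ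
  have hb0 : volume (ball x r) ≠ 0 := (measure_ball_pos _ x hr).ne'
  have hbt : volume (ball x r) ≠ ∞ := measure_ball_lt_top.ne
  set b := volume (ball x r) with hb
  have h2 : b * (κ * b) ≤ b * (ENNReal.ofReal (2 * r) * 2 ^ n * I) := by
    calc b * (κ * b) = κ * (b * b) := by ring
      _ ≤ _ := h1
      _ = _ := by ring
  rw [ENNReal.mul_le_mul_iff_right hb0 hbt] at h2
  rw [hb, vol_ball_eq x hr] at h2
  have hpow : r ^ n = r * r ^ (n - 1) := by
    rw [← pow_succ']; congr 1; omega
  rw [hpow, ENNReal.ofReal_mul hr.le, ENNReal.ofReal_mul (by norm_num)] at h2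
  have hr0 : ENNReal.ofReal r ≠ 0 := (ENNReal.ofReal_pos.2 hr).ne'
  rw [← ENNReal.mul_le_mul_iff_right hr0 ENNReal.ofReal_ne_top]
  have e2 : ENNReal.ofReal 2 = 2 := by norm_num
  rw [e2] at h2
  calc _ = κ * (ENNReal.ofReal r * ENNReal.ofReal (r ^ (n - 1)) * volume (ball (0 : En n) 1)) := by ring
    _ ≤ _ := h2
    _ = _ := by ring

lemma case_two {n : ℕ} (v : En n → ℝ) (T : ℝ) (hT : 0 < T)
    (B D : Set (En n)) (hDm : MeasurableSet D) (hDB : D ⊆ B)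
    (hBt : volume B ≠ ∞) (hD : volume B ≤ 2 * volume D) (hvD : ∀ z ∈ D, |v z| ≤ 2 * T)
    (hav : ENNReal.ofReal (4 * T) * volume B ≤ ∫⁻ y in B, ‖v y‖ₑ) :
    ENNReal.ofReal T * (volume B * volume B) ≤ ∫⁻ y in B, ∫⁻ z in B, ‖v y - v z‖ₑ := by
  have h1 : ∀ y, (‖v y‖ₑ - ENNReal.ofReal (2 * T)) * volume D ≤ ∫⁻ z in B, ‖v y - v z‖ₑ := by
    intro y
    rw [← setLIntegral_const]
    refine le_trans ?_ (lintegral_mono_set hDB)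
    apply setLIntegral_mono' hDm
    intro z hz
    rw [tsub_le_iff_right, ← ofReal_norm, ← ofReal_norm, ← ENNReal.ofReal_add (by positivity) (by positivity)]
    apply ENNReal.ofReal_le_ofReal
    have := hvD z hz
    have h2 := norm_sub_norm_le (v y) (v z)
    simp only [Real.norm_eq_abs] at *
    linarith
  refine le_trans ?_ (lintegral_mono h1)
  rw [lintegral_mul_const' _ _ (measure_ne_top_of_subset hDB hBt)]
  have h3 : ENNReal.ofReal (2 * T) * volume B ≤ ∫⁻ y in B, (‖v y‖ₑ - ENNReal.ofReal (2 * T)) := by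
    refine le_trans ?_ (lintegral_sub_le _ _ (by fun_prop))
    rw [setLIntegral_const]
    refine le_trans ?_ (tsub_le_tsub_right hav _)
    rw [show 4 * T = 2 * T + 2 * T by ring, ENNReal.ofReal_add (by positivity) (by positivity), add_mul,
      ENNReal.add_sub_cancel_right (ENNReal.mul_ne_top ENNReal.ofReal_ne_top hBt)]
  refine le_trans ?_ (mul_le_mul_left h3 _)
  calc ENNReal.ofReal T * (volume B * volume B) ≤ ENNReal.ofReal T * (volume B * (2 * volume D)) := by
        gcongr
    _ = _ := by
      rw [ENNReal.ofReal_mul (by norm_num)]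
      norm_num
      ring

lemma case_one {n : ℕ} (w : En n → ℝ)
    (B A1 A0 : Set (En n)) (hm1 : MeasurableSet A1) (hm0 : MeasurableSet A0) (hB1 : A1 ⊆ B) (hB0 : A0 ⊆ B)
    (h1 : ∀ z ∈ A1, w z = 1) (h0 : ∀ z ∈ A0, w z = 0) :
    volume A1 * volume A0 ≤ ∫⁻ y in B, ∫⁻ z in B, ‖w y - w z‖ₑ := by
  calc volume A1 * volume A0 = ∫⁻ y in A1, ∫⁻ z in A0, 1 := by
        simp [mul_comm]
    _ ≤ ∫⁻ y in A1, ∫⁻ z in B, ‖w y - w z‖ₑ := by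
        apply setLIntegral_mono' hm1
        intro y hy
        refine le_trans ?_ (lintegral_mono_set hB0)
        apply setLIntegral_mono' hm0
        intro z hz
        rw [h1 y hy, h0 z hz]; simp
    _ ≤ _ := lintegral_mono_set hB1

lemma pick_radius {n : ℕ} (hn : 1 ≤ n) (v w : En n → ℝ) (hv : ContDiff ℝ 1 v) (hw : ContDiff ℝ 1 w)
    (hvc : HasCompactSupport v) (T : ℝ) (hT : 0 < T)
    (hw1 : ∀ z, w z ≠ 1 → |v z| ≤ 2 * T) (hw0 : ∀ z, v z = 0 → w z = 0) (δ : ℝ) (hδ : 0 < δ)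
    (hP : 4 * volume {z | w z ≠ 0 ∧ w z ≠ 1} ≤ volume (ball (0 : En n) δ)) :
    ∃ R : ℝ, ∀ (x : En n) (ρ : ℝ), δ ≤ ρ → ρ ≤ 1 →
      ENNReal.ofReal (4 * T) * volume (ball x ρ) ≤ ∫⁻ y in ball x ρ, ‖v y‖ₑ →
      ∃ r, 0 < r ∧ r ≤ R ∧ volume (ball (0 : En n) 1) * ENNReal.ofReal (r ^ (n - 1)) ≤
        2 ^ (2 * n + 4) * ∫⁻ p in ball x r, (‖fderiv ℝ w p‖ₑ + (ENNReal.ofReal T)⁻¹ * ‖fderiv ℝ v p‖ₑ) := by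
  set V := volume (tsupport v) with hV
  have hVt : V ≠ ∞ := hvc.isCompact.measure_lt_top.ne
  set ω := volume (ball (0 : En n) 1) with hω
  have hω0 : ω ≠ 0 := (measure_ball_pos _ _ one_pos).ne'
  have hωt : ω ≠ ∞ := measure_ball_lt_top.ne
  set A : Set (En n) := {z | w z = 1} with hA
  set Z : Set (En n) := {z | w z = 0} with hZ
  have hAm : MeasurableSet A := (isClosed_eq hw.continuous continuous_const).measurableSet
  have hZm : MeasurableSet Z := (isClosed_eq hw.continuous continuous_const).measurableSet
  have hAV : volume A ≤ V := by
    apply measure_mono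
    intro z hz
    apply subset_tsupport
    intro h0
    have := hw0 z h0
    rw [show w z = 1 from hz] at this
    exact one_ne_zero this
  set S0 : ℝ := max 1 (2 * V / ω).toReal with hS0
  have hbig : ∀ (x : En n) (s : ℝ), 0 < s → volume (ball x s) ≤ 2 * volume (A ∩ ball x s) → s ≤ S0 := by
    intro x s hs h
    by_contra hcon
    push Not at hcon
    have hs1 : 1 ≤ s := (le_max_left _ _).trans hcon.le
    have h2 : ENNReal.ofReal (s ^ n) * ω ≤ 2 * V := by
      rw [← vol_ball_eq x hs]
      exact h.trans (by gcongr; exact (measure_mono inter_subset_left).trans hAV)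
    have h3 : ENNReal.ofReal (s ^ n) ≤ 2 * V / ω := by
      rwa [ENNReal.le_div_iff_mul_le (Or.inl hω0) (Or.inl hωt)]
    have hfin : 2 * V / ω ≠ ∞ := ENNReal.div_ne_top (ENNReal.mul_ne_top (by norm_num) hVt) hω0
    have h4 : s ^ n ≤ (2 * V / ω).toReal := (ENNReal.ofReal_le_iff_le_toReal hfin).1 h3
    have h5 : s ≤ s ^ n := le_self_pow₀ hs1 (by omega)
    have h6 := le_max_right 1 (2 * V / ω).toReal
    linarith
  refine ⟨2 * S0, fun x ρ hδρ hρ1 hav => ?_⟩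
  have hρ : 0 < ρ := hδ.trans_le hδρ
  have hS1 : 1 ≤ S0 := le_max_left _ _
  by_cases hcase : volume (ball x ρ) ≤ 2 * volume (A ∩ ball x ρ)
  · -- case one
    have hex : ∃ k : ℕ, ¬ (volume (ball x (2 ^ k * ρ)) ≤ 2 * volume (A ∩ ball x (2 ^ k * ρ))) := by
      obtain ⟨k, hk⟩ := pow_unbounded_of_one_lt (S0 / ρ) (one_lt_two (α := ℝ))
      refine ⟨k, fun h => ?_⟩
      have := hbig x _ (by positivity) h
      rw [div_lt_iff₀ hρ] at hk
      linarith
    classical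
    set k1 := Nat.find hex with hk1
    have hk1s := Nat.find_spec hex
    have hk1pos : k1 ≠ 0 := by
      intro h0
      rw [← hk1, h0] at hk1s
      simp at hk1s
      exact absurd hcase (not_le.2 hk1s)
    obtain ⟨k, hk⟩ := Nat.exists_eq_succ_of_ne_zero hk1pos
    have hQk : volume (ball x (2 ^ k * ρ)) ≤ 2 * volume (A ∩ ball x (2 ^ k * ρ)) := by
      have := Nat.find_min hex (m := k) (by omega)
      exact not_not.1 this
    rw [← hk1, hk] at hk1s
    set r := 2 ^ (k.succ) * ρ with hr
    have hrpos : 0 < r := by positivity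
    have hr2 : r = 2 * (2 ^ k * ρ) := by rw [hr, pow_succ]; ring
    have hrR : r ≤ 2 * S0 := by
      rw [hr2]
      have := hbig x _ (by positivity) hQk
      linarith
    refine ⟨r, hrpos, hrR, ?_⟩
    have hk1s' := (not_le.1 hk1s).le
    have hbt : volume (ball x r) ≠ ∞ := measure_ball_lt_top.ne
    have hb1 : volume (ball x r) ≤ 2 ^ (n + 1) * volume (A ∩ ball x r) := by
      have : volume (ball x r) = 2 ^ n * volume (ball x (2 ^ k * ρ)) := by
        rw [vol_ball_eq x hrpos, vol_ball_eq x (by positivity : 0 < 2 ^ k * ρ), hr2, mul_pow,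
          ENNReal.ofReal_mul (by positivity), ENNReal.ofReal_pow (by norm_num)]
        norm_num
        ring
      rw [this, pow_succ, mul_assoc]
      gcongr 1
      refine hQk.trans ?_
      refine mul_le_mul_right (measure_mono (inter_subset_inter_right _ (ball_subset_ball ?_))) _
      rw [hr2]; linarith [show 0 < 2 ^ k * ρ by positivity]
    have hPb : 4 * volume {z | w z ≠ 0 ∧ w z ≠ 1} ≤ volume (ball x r) := by
      refine hP.trans ?_
      rw [vol_ball_eq _ hδ, vol_ball_eq x hrpos]
      gcongr
      rw [hr]
      have : (1:ℝ) ≤ 2 ^ k.succ := one_le_pow₀ (by norm_num)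
      nlinarith
    have hcov : volume (ball x r) ≤ volume (A ∩ ball x r) + volume (Z ∩ ball x r) +
        volume {z | w z ≠ 0 ∧ w z ≠ 1} := by
      refine le_trans (measure_mono ?_) ((measure_union_le _ _).trans (add_le_add_left (measure_union_le _ _) _))
      intro z hz
      by_cases h1 : w z = 1
      · exact Or.inl (Or.inl ⟨h1, hz⟩)
      · by_cases h0 : w z = 0
        · exact Or.inl (Or.inr ⟨h0, hz⟩)
        · exact Or.inr ⟨h0, h1⟩
    have hb0 : volume (ball x r) ≤ 4 * volume (Z ∩ ball x r) := by
      have ht1 : volume (A ∩ ball x r) ≠ ∞ := measure_ne_top_of_subset inter_subset_right hbt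
      have ht0 : volume (Z ∩ ball x r) ≠ ∞ := measure_ne_top_of_subset inter_subset_right hbt
      have htp : volume {z | w z ≠ 0 ∧ w z ≠ 1} ≠ ∞ := by
        intro h; rw [h] at hPb
        exact hbt (top_le_iff.1 (by simpa using hPb))
      revert hk1s' hPb hcov
      generalize volume (ball x r) = b at *
      generalize volume (A ∩ ball x r) = a1 at *
      generalize volume (Z ∩ ball x r) = a0 at *
      generalize volume {z | w z ≠ 0 ∧ w z ≠ 1} = p at *
      lift b to ℝ≥0 using hbt
      lift a1 to ℝ≥0 using ht1
      lift a0 to ℝ≥0 using ht0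
      lift p to ℝ≥0 using htp
      norm_cast
      intro i1 i2 i3
      rw [← NNReal.coe_le_coe] at *
      push_cast at *
      linarith
    have hkey := ball_gain hn w hw x r hrpos ((2 ^ (n + 3))⁻¹) (by
      refine le_trans ?_ (case_one w (ball x r) (A ∩ ball x r) (Z ∩ ball x r)
        (hAm.inter measurableSet_ball) (hZm.inter measurableSet_ball) inter_subset_right
        inter_subset_right (fun z hz => hz.1) (fun z hz => hz.1))
      rw [ENNReal.inv_mul_le_iff (by positivity) (by simp)]
      calc volume (ball x r) * volume (ball x r) ≤ (2 ^ (n + 1) * volume (A ∩ ball x r)) *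
            (4 * volume (Z ∩ ball x r)) := by gcongr
        _ = _ := by ring)
    rw [ENNReal.inv_mul_le_iff (by positivity) (by simp)] at hkey
    refine hkey.trans ?_
    rw [← mul_assoc, ← pow_add]
    rw [show n + 3 + (n + 1) = 2 * n + 4 by ring]
    gcongr
    exact le_self_add
  · -- case two
    refine ⟨ρ, hρ, by linarith, ?_⟩
    have hbt : volume (ball x ρ) ≠ ∞ := measure_ball_lt_top.ne
    have hD : volume (ball x ρ) ≤ 2 * volume (ball x ρ \ A) := by
      have h1 : volume (ball x ρ) ≤ volume (A ∩ ball x ρ) + volume (ball x ρ \ A) := by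
        rw [inter_comm, measure_inter_add_sdiff _ hAm]
      have hc := (not_le.1 hcase).le
      have ht1 : volume (A ∩ ball x ρ) ≠ ∞ := measure_ne_top_of_subset inter_subset_right hbt
      have ht0 : volume (ball x ρ \ A) ≠ ∞ := measure_ne_top_of_subset sdiff_subset hbt
      clear hcase hav
      revert h1 hc
      generalize volume (ball x ρ) = b at *
      generalize volume (A ∩ ball x ρ) = a1 at *
      generalize volume (ball x ρ \ A) = a0 at *
      lift b to ℝ≥0 using hbt
      lift a1 to ℝ≥0 using ht1
      lift a0 to ℝ≥0 using ht0
      norm_cast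
      intro i1 i2
      rw [← NNReal.coe_le_coe] at *
      push_cast at *
      linarith
    have hkey := ball_gain hn v hv x ρ hρ (ENNReal.ofReal T)
      (case_two v T hT (ball x ρ) (ball x ρ \ A) (measurableSet_ball.diff hAm) sdiff_subset
        hbt hD (fun z hz => hw1 z hz.2) hav)
    have hT0 : ENNReal.ofReal T ≠ 0 := (ENNReal.ofReal_pos.2 hT).ne'
    rw [ENNReal.mul_le_iff_le_inv hT0 ENNReal.ofReal_ne_top] at hkey
    refine hkey.trans ?_
    calc _ = 2 ^ (n + 1) * ∫⁻ p in ball x ρ, (ENNReal.ofReal T)⁻¹ * ‖fderiv ℝ v p‖ₑ := by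
          rw [lintegral_const_mul' _ _ (ENNReal.inv_ne_top.2 hT0)]; ring
      _ ≤ _ := mul_le_mul' (pow_le_pow_right₀ (by norm_num) (by omega))
          (lintegral_mono fun p => le_add_self)

lemma hcont_cover {n : ℕ} (hn : 1 ≤ n) (E : Set (En n)) (ν : Measure (En n)) (K : ℝ≥0∞) (R : ℝ)
    (h : ∀ x ∈ E, ∃ r, 0 < r ∧ r ≤ R ∧ ENNReal.ofReal (r ^ (n - 1)) ≤ K * ν (ball x r)) :
    hcont n E ≤ 10 ^ (n - 1) * K * ν univ := by
  choose! r hr0 hrR hr using h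
  obtain ⟨u, hut, hdis, hcov⟩ := Vitali.exists_disjoint_subfamily_covering_enlargement_closedBall
    E (fun x => x) r R hrR 5 (by norm_num)
  have hc : u.Countable := hdis.countable_of_nonempty_interior (fun a ha => by
    refine ⟨a, ?_⟩
    exact ball_subset_interior_closedBall (mem_ball_self (hr0 a (hut ha))))
  have hsub : E ⊆ ⋃ b ∈ u, closedBall b (5 * r b) := by
    intro x hx
    obtain ⟨b, hb, hb'⟩ := hcov x hx
    exact mem_biUnion hb (hb' (mem_closedBall_self (hr0 x hx).le))
  have hcu : Countable u := hc.to_subtype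
  have hone : ∀ b ∈ u, hcont n (closedBall b (5 * r b)) ≤ 10 ^ (n - 1) * K * ν (ball b (r b)) := by
    intro b hb
    have h0 := hr0 b (hut hb)
    have hd : ediam (closedBall b (5 * r b)) ≤ ENNReal.ofReal (10 * r b) := by
      refine Metric.ediam_le fun y hy z hz => ?_
      rw [edist_dist]
      refine ENNReal.ofReal_le_ofReal ?_
      have := dist_triangle_right y z b
      rw [mem_closedBall] at hy hz
      linarith
    have he : ((n:ℝ) - 1) = ((n - 1 : ℕ) : ℝ) := by
      rw [Nat.cast_sub hn]; simp
    calc hcont n (closedBall b (5 * r b)) ≤ _ := hcont_le _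
      _ ≤ (ENNReal.ofReal (10 * r b)) ^ (n - 1) := by
        rw [he, ENNReal.rpow_natCast]
        exact pow_le_pow_left' hd _
      _ = 10 ^ (n - 1) * ENNReal.ofReal (r b ^ (n - 1)) := by
        rw [ENNReal.ofReal_mul (by norm_num), mul_pow, ENNReal.ofReal_pow h0.le]
        simp
      _ ≤ _ := by
        rw [mul_assoc]
        exact mul_le_mul_right (hr b (hut hb)) _
  have hdis' : Pairwise (Function.onFun Disjoint fun b : u => ball b.1 (r b.1)) := by
    intro a b hab
    exact (hdis a.2 b.2 (fun h => hab (Subtype.ext h))).mono ball_subset_closedBall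
      ball_subset_closedBall
  calc hcont n E ≤ hcont n (⋃ b : u, closedBall b.1 (5 * r b.1)) := by
        refine measure_mono ?_
        rwa [← biUnion_eq_iUnion u (fun b _ => closedBall b (5 * r b))]
    _ ≤ ∑' b : u, hcont n (closedBall b.1 (5 * r b.1)) := measure_iUnion_le _
    _ ≤ ∑' b : u, 10 ^ (n - 1) * K * ν (ball b.1 (r b.1)) :=
        ENNReal.tsum_le_tsum fun b => hone b.1 b.2
    _ = 10 ^ (n - 1) * K * ∑' b : u, ν (ball b.1 (r b.1)) := ENNReal.tsum_mul_left
    _ ≤ _ := by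
        refine mul_le_mul_right ?_ _
        rw [← measure_iUnion hdis' (fun _ => measurableSet_ball)]
        exact measure_mono (subset_univ _)

lemma weak_type {n : ℕ} (hn : 1 ≤ n) : ∃ C : ℝ≥0∞, C ≠ ∞ ∧ ∀ v : En n → ℝ, ContDiff ℝ 1 v →
    HasCompactSupport v → ∀ T L : ℝ, 0 < T → (∫⁻ z, ‖fderiv ℝ v z‖ₑ) < ENNReal.ofReal L →
    hcont n {x | ∃ r, 0 < r ∧ r ≤ 1 ∧
      ENNReal.ofReal (5 * T) * volume (ball x r) < ∫⁻ y in ball x r, ‖v y‖ₑ} ≤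
      C * ENNReal.ofReal (L / T) := by
  obtain ⟨C0, hC0, hcut⟩ := exists_cut (n := n)
  set ω := volume (ball (0 : En n) 1) with hω
  have hω0 : ω ≠ 0 := (measure_ball_pos _ _ one_pos).ne'
  have hωt : ω ≠ ∞ := measure_ball_lt_top.ne
  refine ⟨10 ^ (n - 1) * (ω⁻¹ * 2 ^ (2 * n + 4)) * (ENNReal.ofReal C0 + 1), ?_, ?_⟩
  · refine ENNReal.mul_ne_top (ENNReal.mul_ne_top (by simp) (ENNReal.mul_ne_top ?_ (by simp)))
      (by simp)
    exact ENNReal.inv_ne_top.2 hω0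
  intro v hv hvc T L hT hL
  have hLpos : 0 < L := ENNReal.ofReal_pos.1 (lt_of_le_of_lt zero_le hL)
  have hT0 : ENNReal.ofReal T ≠ 0 := (ENNReal.ofReal_pos.2 hT).ne'
  have huc := hvc.uniformContinuous_of_continuous hv.continuous
  rw [Metric.uniformContinuous_iff] at huc
  obtain ⟨δ0, hδ0, huc⟩ := huc T hT
  set δ := min 1 (δ0 / 2) with hδ
  have hδpos : 0 < δ := lt_min one_pos (by linarith)
  have hδ2 : 2 * δ ≤ δ0 := by have := min_le_right 1 (δ0 / 2); linarith
  have hδ1 : δ ≤ 1 := min_le_left _ _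
  have hbp : 0 < (volume (ball (0 : En n) δ)).toReal :=
    ENNReal.toReal_pos (measure_ball_pos _ _ hδpos).ne' measure_ball_lt_top.ne
  obtain ⟨w, hw, hw1, hw0, hvol, hgrad⟩ := hcut v hv hvc T L
    ((volume (ball (0 : En n) δ)).toReal / 4) hT (by positivity) hL
  obtain ⟨R, hR⟩ := pick_radius hn v w hv hw hvc T hT hw1 hw0 δ hδpos (by
    refine (mul_le_mul_right hvol 4).trans ?_
    rw [show (4 : ℝ≥0∞) = ENNReal.ofReal 4 by simp, ← ENNReal.ofReal_mul (by norm_num),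
      mul_div_cancel₀ _ (by norm_num), ENNReal.ofReal_toReal measure_ball_lt_top.ne])
  set F : En n → ℝ≥0∞ := fun p => ‖fderiv ℝ w p‖ₑ + (ENNReal.ofReal T)⁻¹ * ‖fderiv ℝ v p‖ₑ with hF
  have hνu : (volume.withDensity F) univ ≤ (ENNReal.ofReal C0 + 1) * ENNReal.ofReal (L / T) := by
    rw [withDensity_apply _ MeasurableSet.univ, Measure.restrict_univ, hF, lintegral_add_left
      (hw.continuous_fderiv one_ne_zero).enorm.measurable, lintegral_const_mul' _ _
      (ENNReal.inv_ne_top.2 hT0), add_mul]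
    refine add_le_add ?_ ?_
    · rw [← ENNReal.ofReal_mul hC0.le, ← mul_div_assoc]; exact hgrad
    · rw [one_mul, ENNReal.ofReal_div_of_pos hT, ENNReal.div_eq_inv_mul]
      exact mul_le_mul_right hL.le _
  refine (hcont_cover hn _ (volume.withDensity F) (ω⁻¹ * 2 ^ (2 * n + 4)) R ?_).trans
    ((mul_le_mul_right hνu _).trans_eq (by ring))
  rintro x ⟨r, hr0, hr1, hr⟩
  have key : ∃ ρ, δ ≤ ρ ∧ ρ ≤ 1 ∧
      ENNReal.ofReal (4 * T) * volume (ball x ρ) ≤ ∫⁻ y in ball x ρ, ‖v y‖ₑ := by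
    rcases le_or_gt δ r with h | h
    · refine ⟨r, h, hr1, le_trans ?_ hr.le⟩
      exact mul_le_mul_left (ENNReal.ofReal_le_ofReal (by linarith)) _
    · refine ⟨δ, le_rfl, hδ1, ?_⟩
      obtain ⟨y, hy, hvy⟩ : ∃ y ∈ ball x r, 5 * T < |v y| := by
        by_contra! hcon
        refine absurd hr (not_lt.2 ?_)
        calc ∫⁻ y in ball x r, ‖v y‖ₑ ≤ ∫⁻ y in ball x r, ENNReal.ofReal (5 * T) := by
              refine setLIntegral_mono measurable_const fun y hy => ?_
              rw [← ofReal_norm]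
              exact ENNReal.ofReal_le_ofReal (hcon y hy)
          _ = _ := by simp
      calc ENNReal.ofReal (4 * T) * volume (ball x δ) = ∫⁻ y in ball x δ, ENNReal.ofReal (4 * T) := by simp
        _ ≤ _ := by
          refine setLIntegral_mono (hv.continuous.enorm.measurable) fun z hz => ?_
          rw [← ofReal_norm]
          refine ENNReal.ofReal_le_ofReal ?_
          have h1 : dist y z < δ0 := by
            have := dist_triangle_right y z x
            rw [mem_ball] at hy hz
            linarith
          have h2 := huc h1
          rw [Real.dist_eq] at h2
          have h3 := abs_sub_abs_le_abs_sub (v y) (v z)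
          rw [Real.norm_eq_abs]
          linarith
  obtain ⟨ρ, h1, h2, h3⟩ := key
  obtain ⟨s, hs0, hsR, hs⟩ := hR x ρ h1 h2 h3
  refine ⟨s, hs0, hsR, ?_⟩
  rw [withDensity_apply _ measurableSet_ball, mul_assoc, ← ENNReal.mul_le_iff_le_inv hω0 hωt]
  exact hs

noncomputable def moll {n : ℕ} (φ : ContDiffBump (0 : En n)) (F : En n → ℝ) : En n → ℝ :=
  MeasureTheory.convolution (φ.normed volume) F (ContinuousLinearMap.lsmul ℝ ℝ) volume

lemma moll_apply {n : ℕ} (φ : ContDiffBump (0 : En n)) (F : En n → ℝ) (x : En n) :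
    moll φ F x = ∫ t, φ.normed volume t * F (x - t) := rfl

lemma moll_apply' {n : ℕ} (φ : ContDiffBump (0 : En n)) (F : En n → ℝ) (x : En n) :
    moll φ F x = ∫ t, φ.normed volume (x - t) * F t := by
  rw [moll_apply, ← integral_sub_left_eq_self _ volume x]
  simp

lemma moll_young {n : ℕ} (φ : ContDiffBump (0 : En n)) (F : En n → ℝ) (hF : Integrable F) :
    ∫⁻ x, ‖moll φ F x‖ₑ ≤ ∫⁻ x, ‖F x‖ₑ := by
  have hmeas : AEStronglyMeasurable (fun p : En n × En n => φ.normed volume p.2 * F (p.1 - p.2))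
      (volume.prod volume) :=
    AEStronglyMeasurable.convolution_integrand (ContinuousLinearMap.lsmul ℝ ℝ)
      φ.continuous_normed.aestronglyMeasurable hF.1
  calc ∫⁻ x, ‖moll φ F x‖ₑ ≤ ∫⁻ x, ∫⁻ t, ‖φ.normed volume t * F (x - t)‖ₑ :=
        lintegral_mono fun x => enorm_integral_le_lintegral_enorm _
    _ = ∫⁻ t, ∫⁻ x, ‖φ.normed volume t * F (x - t)‖ₑ := lintegral_lintegral_swap hmeas.enorm
    _ = ∫⁻ t, ‖φ.normed volume t‖ₑ * ∫⁻ x, ‖F x‖ₑ := by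
        refine lintegral_congr fun t => ?_
        simp_rw [enorm_mul]
        rw [lintegral_const_mul' _ _ enorm_ne_top]
        congr 1
        exact lintegral_sub_right_eq_self (fun x => ‖F x‖ₑ) t
    _ = (∫⁻ t, ‖φ.normed volume t‖ₑ) * ∫⁻ x, ‖F x‖ₑ :=
        lintegral_mul_const _ φ.continuous_normed.enorm.measurable
    _ = ∫⁻ x, ‖F x‖ₑ := by
        rw [← ofReal_integral_norm_eq_lintegral_enorm φ.integrable_normed]
        have : ∀ t, ‖φ.normed volume t‖ = φ.normed volume t := fun t =>
          Real.norm_of_nonneg (φ.nonneg_normed t)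
        simp_rw [this, φ.integral_normed]
        simp

lemma moll_sub {n : ℕ} (φ : ContDiffBump (0 : En n)) (F G : En n → ℝ) (hF : Integrable F)
    (hG : Integrable G) (x : En n) : moll φ (fun y => F y - G y) x = moll φ F x - moll φ G x := by
  rw [moll_apply, moll_apply, moll_apply, ← integral_sub]
  · simp_rw [mul_sub]
  · exact φ.hasCompactSupport_normed.convolutionExists_left (ContinuousLinearMap.lsmul ℝ ℝ)
      φ.continuous_normed hF.locallyIntegrable x
  · exact φ.hasCompactSupport_normed.convolutionExists_left (ContinuousLinearMap.lsmul ℝ ℝ)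
      φ.continuous_normed hG.locallyIntegrable x

lemma moll_L1_cont {n : ℕ} (F : En n → ℝ) (hF : Continuous F) (hc : HasCompactSupport F)
    (ε : ℝ≥0∞) (hε : ε ≠ 0) : ∃ δ : ℝ, 0 < δ ∧ ∀ φ : ContDiffBump (0 : En n), φ.rOut < δ →
      ∫⁻ x, ‖moll φ F x - F x‖ₑ ≤ ε := by
  obtain ⟨R, hR⟩ := hc.isCompact.isBounded.subset_closedBall (0 : En n)
  set V := volume (closedBall (0 : En n) (R + 1)) with hV
  have hVt : V ≠ ∞ := measure_closedBall_lt_top.ne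
  obtain ⟨e, he0, he⟩ : ∃ e : ℝ, 0 < e ∧ ENNReal.ofReal e * V ≤ ε := by
    by_cases hεt : ε = ∞
    · exact ⟨1, one_pos, by simp [hεt]⟩
    refine ⟨(ε / (V + 1)).toReal, ENNReal.toReal_pos ?_ ?_, ?_⟩
    · exact (ENNReal.div_pos hε (by simp [hVt])).ne'
    · exact ENNReal.div_ne_top hεt (by simp)
    · rw [ENNReal.ofReal_toReal (ENNReal.div_ne_top hεt (by simp))]
      calc ε / (V + 1) * V ≤ ε / (V + 1) * (V + 1) := mul_le_mul_right le_self_add _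
        _ ≤ ε := by rw [mul_comm]; exact ENNReal.mul_div_le
  have huc := hc.uniformContinuous_of_continuous hF
  rw [Metric.uniformContinuous_iff] at huc
  obtain ⟨δ, hδ, huc⟩ := huc e he0
  refine ⟨min δ 1, lt_min hδ one_pos, fun φ hφ => ?_⟩
  have hφ1 : φ.rOut < 1 := hφ.trans_le (min_le_right _ _)
  have hφδ : φ.rOut < δ := hφ.trans_le (min_le_left _ _)
  calc ∫⁻ x, ‖moll φ F x - F x‖ₑ ≤ ∫⁻ x, (closedBall (0 : En n) (R + 1)).indicator
        (fun _ => ENNReal.ofReal e) x := by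
        refine lintegral_mono fun x => ?_
        by_cases hx : x ∈ closedBall (0 : En n) (R + 1)
        · rw [indicator_of_mem hx, ← ofReal_norm, ← dist_eq_norm]
          refine ENNReal.ofReal_le_ofReal ?_
          refine φ.dist_normed_convolution_le hF.aestronglyMeasurable fun y hy => (huc ?_).le
          exact (mem_ball.1 hy).trans hφδ
        · rw [indicator_of_notMem hx, ← ofReal_norm, ← dist_eq_norm]
          have hz : ∀ y ∈ ball x 1, F y = 0 := by
            intro y hy
            refine image_eq_zero_of_notMem_tsupport fun hy' => hx ?_
            have h1 := hR hy'
            rw [mem_closedBall] at h1 ⊢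
            rw [mem_ball] at hy
            have := dist_triangle_left x 0 y
            linarith
          have h := φ.dist_normed_convolution_le (μ := volume) (x₀ := x) (ε := 0)
            hF.aestronglyMeasurable (fun y hy => by
              rw [hz y (ball_subset_ball hφ1.le hy), hz x (mem_ball_self one_pos), dist_self])
          exact (ENNReal.ofReal_eq_zero.2 h).le
    _ = ENNReal.ofReal e * V := by
        rw [lintegral_indicator measurableSet_closedBall]; simp [hV]
    _ ≤ ε := he

lemma moll_L1 {n : ℕ} (F : En n → ℝ) (hF : Integrable F)
    (ε : ℝ≥0∞) (hε : ε ≠ 0) : ∃ δ : ℝ, 0 < δ ∧ ∀ φ : ContDiffBump (0 : En n), φ.rOut < δ →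
      ∫⁻ x, ‖moll φ F x - F x‖ₑ ≤ ε := by
  have hε3 : ε / 3 ≠ 0 := (ENNReal.div_pos hε (by simp)).ne'
  obtain ⟨G, hGc, hG, hGcont, hGi⟩ := hF.exists_hasCompactSupport_lintegral_sub_le hε3
  obtain ⟨δ, hδ, hφ⟩ := moll_L1_cont G hGcont hGc _ hε3
  refine ⟨δ, hδ, fun φ h => ?_⟩
  have hFG : Integrable (fun y => F y - G y) := hF.sub hGi
  have m1 : AEMeasurable (fun x => ‖moll φ G x - G x‖ₑ) := by
    refine AEStronglyMeasurable.enorm (Continuous.aestronglyMeasurable ?_)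
    refine Continuous.sub ?_ hGcont
    exact φ.hasCompactSupport_normed.continuous_convolution_left (ContinuousLinearMap.lsmul ℝ ℝ)
      φ.continuous_normed hGi.locallyIntegrable
  calc ∫⁻ x, ‖moll φ F x - F x‖ₑ ≤ ∫⁻ x, ((‖F x - G x‖ₑ + ‖moll φ G x - G x‖ₑ) +
        ‖moll φ (fun y => F y - G y) x‖ₑ) := by
        refine lintegral_mono fun x => ?_
        rw [moll_sub φ F G hF hGi]
        calc ‖moll φ F x - F x‖ₑ = ‖((G x - F x) + (moll φ G x - G x)) + (moll φ F x - moll φ G x)‖ₑ := by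
              congr 1; ring
          _ ≤ _ := by
              refine (enorm_add_le _ _).trans (add_le_add_left ((enorm_add_le _ _).trans ?_) _)
              rw [enorm_sub_rev (G x)]
    _ = (∫⁻ x, ‖F x - G x‖ₑ) + (∫⁻ x, ‖moll φ G x - G x‖ₑ) +
          ∫⁻ x, ‖moll φ (fun y => F y - G y) x‖ₑ := by
        rw [lintegral_add_left' (AEMeasurable.fun_add hFG.1.enorm m1), lintegral_add_left' hFG.1.enorm]
    _ ≤ ε / 3 + ε / 3 + ε / 3 :=
        add_le_add (add_le_add hG (hφ φ h)) ((moll_young φ _ hFG).trans hG)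
    _ = ε := ENNReal.add_thirds ε

lemma conv_fderiv {n : ℕ} (φ : En n → ℝ) (hφc : HasCompactSupport φ) (hφ : ContDiff ℝ 1 φ)
    (F : En n → ℝ) (hF : Integrable F)
    (e x : En n) :
    fderiv ℝ (MeasureTheory.convolution φ F (ContinuousLinearMap.lsmul ℝ ℝ) volume) x e =
      ∫ t, fderiv ℝ φ t e * F (x - t) := by
  rw [(hφc.hasFDerivAt_convolution_left (μ := volume)
    (ContinuousLinearMap.lsmul ℝ ℝ) hφ hF.locallyIntegrable x).fderiv, MeasureTheory.convolution_def]
  have h : ∀ t, ((ContinuousLinearMap.lsmul ℝ ℝ).precompL (En n)) (fderiv ℝ φ t) (F (x - t)) = F (x - t) • fderiv ℝ φ t := by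
    intro t
    ext y
    simp [ContinuousLinearMap.precompL_apply, mul_comm]
  have hx : LocallyIntegrable (fun t => F (x - t)) :=
    (hF.comp_sub_left x).locallyIntegrable
  have hI : Integrable (fun t => F (x - t) • fderiv ℝ φ t) :=
    hx.integrable_smul_right_of_hasCompactSupport (hφ.continuous_fderiv one_ne_zero) (hφc.fderiv ℝ)
  simp_rw [h]
  rw [ContinuousLinearMap.integral_apply hI]
  simp [mul_comm]

lemma moll_fderiv {n : ℕ} (φ : ContDiffBump (0 : En n)) (F G : En n → ℝ) (hF : Integrable F)
    (e : En n) (hw : HasWeakPartialOn univ F G e) (x : En n) :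
    fderiv ℝ (moll φ F) x e = moll φ G x := by
  rw [moll, conv_fderiv _ φ.hasCompactSupport_normed φ.contDiff_normed F hF]
  have hη := hw (fun y => φ.normed volume (x - y)) ⟨?_, ?_, subset_univ _⟩
  · rw [moll_apply']
    have h1 : ∀ y, fderiv ℝ (fun y => φ.normed volume (x - y)) y e
        = - fderiv ℝ (φ.normed volume) (x - y) e := by
      intro y
      have h2 : HasFDerivAt (φ.normed volume) (fderiv ℝ (φ.normed volume) (x - y)) (x - y) :=
        ((φ.contDiff_normed (n := 1)).differentiable one_ne_zero _).hasFDerivAt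
      have h3 := h2.comp y ((hasFDerivAt_id y).const_sub x)
      have h4 := h3.fderiv
      rw [Function.comp_def] at h4
      simp only [id] at h4
      rw [h4]
      simp
    simp_rw [h1] at hη
    rw [← integral_sub_left_eq_self _ volume x]
    simp only [sub_sub_cancel]
    simp only [mul_neg, integral_neg, neg_inj] at hη
    simp_rw [mul_comm _ (F _), mul_comm _ (G _)]
    exact hη
  · exact φ.contDiff_normed.comp (contDiff_const.sub contDiff_id)
  · exact φ.hasCompactSupport_normed.comp_homeomorph (Homeomorph.subLeft x)

lemma exists_smooth {n : ℕ} (F : En n → ℝ) (G : Fin n → En n → ℝ) (hF : Integrable F)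
    (hFc : HasCompactSupport F) (hG : ∀ i, Integrable (G i))
    (hw : ∀ i, HasWeakPartialOn univ F (G i) (EuclideanSpace.single i 1)) (ε : ℝ≥0∞) (hε : ε ≠ 0) :
    ∃ v : En n → ℝ, ContDiff ℝ 1 v ∧ HasCompactSupport v ∧ (∫⁻ x, ‖v x - F x‖ₑ) ≤ ε ∧
      ∀ i, (∫⁻ x, ‖fderiv ℝ v x (EuclideanSpace.single i 1) - G i x‖ₑ) ≤ ε := by
  obtain ⟨δ0, hδ0, h0⟩ := moll_L1 F hF ε hε
  choose δ hδ h using fun i => moll_L1 (G i) (hG i) ε hε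
  obtain ⟨d, hd0, hd, hdi⟩ : ∃ d : ℝ, 0 < d ∧ d < δ0 ∧ ∀ i, d < δ i := by
    have : ∀ᶠ d in 𝓝[>] (0:ℝ), 0 < d ∧ d < δ0 ∧ ∀ i, d < δ i := by
      refine (eventually_mem_nhdsWithin).and (Eventually.and ?_ (eventually_all.2 fun i => ?_))
      · exact nhdsWithin_le_nhds (eventually_lt_nhds hδ0)
      · exact nhdsWithin_le_nhds (eventually_lt_nhds (hδ i))
    exact this.exists
  let φ : ContDiffBump (0 : En n) := ⟨d / 2, d, by positivity, by linarith⟩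
  refine ⟨moll φ F, ?_, ?_, h0 φ hd, fun i => ?_⟩
  · exact φ.hasCompactSupport_normed.contDiff_convolution_left (n := 1) (ContinuousLinearMap.lsmul ℝ ℝ)
      φ.contDiff_normed hF.locallyIntegrable
  · exact φ.hasCompactSupport_normed.convolution _ hFc
  · simp_rw [moll_fderiv φ F (G i) hF _ (hw i)]
    exact h i φ (hdi i)

lemma enorm_fderiv_le {n : ℕ} (A : En n →L[ℝ] ℝ) :
    ‖A‖ₑ ≤ ∑ i, ‖A (EuclideanSpace.single i 1)‖ₑ := by
  have : ‖A‖ ≤ ∑ i, ‖A (EuclideanSpace.single i 1)‖ := by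
    refine A.opNorm_le_bound (Finset.sum_nonneg fun i _ => norm_nonneg _) fun x => ?_
    have hx : x = ∑ i, x i • EuclideanSpace.single i (1:ℝ) := by
      ext j
      simp [Finset.sum_apply, Pi.single_apply]
    conv_lhs => rw [hx]
    rw [map_sum, Finset.sum_mul]
    refine (norm_sum_le _ _).trans (Finset.sum_le_sum fun i _ => ?_)
    rw [map_smul, norm_smul, mul_comm]
    exact mul_le_mul_of_nonneg_left (PiLp.norm_apply_le x i) (norm_nonneg _)
  rw [← ofReal_norm]
  refine (ENNReal.ofReal_le_ofReal this).trans ?_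
  rw [ENNReal.ofReal_sum_of_nonneg fun i _ => norm_nonneg _]
  simp_rw [ofReal_norm]
  exact le_rfl

lemma avg_bound {n : ℕ} (F : En n → ℝ) (v : ℕ → En n → ℝ) (hv : ∀ j, Continuous (v j))
    (hvF : ∀ j, (∫⁻ x, ‖v j x - F x‖ₑ) ≤ ENNReal.ofReal ((1 / 4) ^ j)) (J : ℕ) (M0 : ℝ)
    (hM0 : ∀ x, ‖v J x‖ ≤ M0) (x : En n) (r : ℝ)
    (hd : ∀ j, J ≤ j → (∫⁻ y in ball x r, ‖v (j + 1) y - v j y‖ₑ) ≤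
      ENNReal.ofReal (5 * (1 / 2) ^ j) * volume (ball x r)) :
    (∫⁻ y in ball x r, ‖F y‖ₑ) ≤ ENNReal.ofReal (M0 + 10) * volume (ball x r) := by
  have hM00 : 0 ≤ M0 := (norm_nonneg _).trans (hM0 0)
  have hstep : ∀ k, (∫⁻ y in ball x r, ‖v (J + k) y‖ₑ) ≤
      ENNReal.ofReal (M0 + 10 - 10 * (1 / 2) ^ (J + k)) * volume (ball x r) := by
    intro k
    induction k with
    | zero =>
      calc (∫⁻ y in ball x r, ‖v J y‖ₑ) ≤ ∫⁻ y in ball x r, ENNReal.ofReal M0 := by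
            refine lintegral_mono fun y => ?_
            rw [← ofReal_norm]
            exact ENNReal.ofReal_le_ofReal (hM0 y)
        _ = ENNReal.ofReal M0 * volume (ball x r) := by simp
        _ ≤ _ := by
            refine mul_le_mul_left (ENNReal.ofReal_le_ofReal ?_) _
            have : (1 / 2 : ℝ) ^ (J + 0) ≤ 1 := pow_le_one₀ (by norm_num) (by norm_num)
            linarith
    | succ k ih =>
      have hp : (1 / 2 : ℝ) ^ (J + k) ≤ 1 := pow_le_one₀ (by norm_num) (by norm_num)
      calc (∫⁻ y in ball x r, ‖v (J + (k + 1)) y‖ₑ)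
          ≤ ∫⁻ y in ball x r, (‖v (J + k) y‖ₑ + ‖v (J + k + 1) y - v (J + k) y‖ₑ) := by
            refine lintegral_mono fun y => ?_
            calc ‖v (J + (k + 1)) y‖ₑ = ‖v (J + k) y + (v (J + k + 1) y - v (J + k) y)‖ₑ := by
                  rw [← add_assoc]; congr 1; ring
              _ ≤ _ := enorm_add_le _ _
        _ = (∫⁻ y in ball x r, ‖v (J + k) y‖ₑ) +
              ∫⁻ y in ball x r, ‖v (J + k + 1) y - v (J + k) y‖ₑ :=
            lintegral_add_left (hv _).enorm.measurable _
        _ ≤ _ := add_le_add ih (hd (J + k) (by omega))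
        _ = _ := by
            rw [← add_mul, ← ENNReal.ofReal_add (by linarith) (by positivity)]
            congr 2
            rw [← add_assoc, pow_succ]; ring
  have hall : ∀ k, (∫⁻ y in ball x r, ‖F y‖ₑ) ≤ ENNReal.ofReal (M0 + 10) * volume (ball x r) +
      ENNReal.ofReal ((1 / 4) ^ (J + k)) := by
    intro k
    calc (∫⁻ y in ball x r, ‖F y‖ₑ) ≤ ∫⁻ y in ball x r, (‖v (J + k) y‖ₑ + ‖v (J + k) y - F y‖ₑ) := by
          refine lintegral_mono fun y => ?_
          calc ‖F y‖ₑ = ‖v (J + k) y - (v (J + k) y - F y)‖ₑ := by congr 1; ring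
            _ ≤ _ := enorm_sub_le
      _ = (∫⁻ y in ball x r, ‖v (J + k) y‖ₑ) + ∫⁻ y in ball x r, ‖v (J + k) y - F y‖ₑ :=
          lintegral_add_left (hv _).enorm.measurable _
      _ ≤ _ := by
          refine add_le_add ((hstep k).trans ?_) ((setLIntegral_le_lintegral _ _).trans (hvF _))
          refine mul_le_mul_left (ENNReal.ofReal_le_ofReal ?_) _
          have : 0 ≤ (1 / 2 : ℝ) ^ (J + k) := by positivity
          linarith
  have hlim : Tendsto (fun k => ENNReal.ofReal (M0 + 10) * volume (ball x r) +
      ENNReal.ofReal ((1 / 4) ^ (J + k))) atTop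
      (𝓝 (ENNReal.ofReal (M0 + 10) * volume (ball x r) + ENNReal.ofReal 0)) := by
    refine tendsto_const_nhds.add (ENNReal.tendsto_ofReal ?_)
    have := (tendsto_pow_atTop_nhds_zero_of_lt_one (r := (1 / 4 : ℝ)) (by norm_num) (by norm_num))
    exact (this.comp (tendsto_add_atTop_nat J)).congr fun k => by simp [add_comm]
  simpa using ge_of_tendsto' hlim hall

lemma null_unbounded {n : ℕ} (hn : 1 ≤ n) (F : En n → ℝ) (G : Fin n → En n → ℝ)
    (hF : Integrable F) (hFc : HasCompactSupport F) (hG : ∀ i, Integrable (G i))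
    (hw : ∀ i, HasWeakPartialOn univ F (G i) (EuclideanSpace.single i 1)) :
    μH[(n:ℝ) - 1] {x | ∀ M : ℕ, ∃ r, 0 < r ∧ r ≤ 1 ∧
      (M : ℝ≥0∞) * volume (ball x r) < ∫⁻ y in ball x r, ‖F y‖ₑ} = 0 := by
  refine hcont_null hn _ ?_
  obtain ⟨C, hCt, hC⟩ := weak_type hn
  have hε : ∀ j : ℕ, ENNReal.ofReal ((1 / 4 : ℝ) ^ j) ≠ 0 := fun j =>
    (ENNReal.ofReal_pos.2 (by positivity)).ne'
  choose v hv hvc hvF hvG using fun j : ℕ => exists_smooth F G hF hFc hG hw _ (hε j)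
  set A : ℕ → Set (En n) := fun j => {x | ∃ r, 0 < r ∧ r ≤ 1 ∧
      ENNReal.ofReal (5 * (1 / 2) ^ j) * volume (ball x r) <
        ∫⁻ y in ball x r, ‖v (j + 1) y - v j y‖ₑ} with hA
  have hAle : ∀ j, hcont n (A j) ≤ C * ENNReal.ofReal ((2 * n + 1) * (1 / 2) ^ j) := by
    intro j
    have hgr : (∫⁻ z, ‖fderiv ℝ (fun y => v (j + 1) y - v j y) z‖ₑ) <
        ENNReal.ofReal ((2 * n + 1) * (1 / 4) ^ j) := by
      have hone : ∀ i : Fin n, (∫⁻ z, ‖fderiv ℝ (fun y => v (j + 1) y - v j y) z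
          (EuclideanSpace.single i 1)‖ₑ) ≤ ENNReal.ofReal (2 * (1 / 4) ^ j) := by
        intro i
        have hm : AEMeasurable (fun z => ‖fderiv ℝ (v (j+1)) z (EuclideanSpace.single i 1) - G i z‖ₑ) := by
          refine AEStronglyMeasurable.enorm (AEStronglyMeasurable.sub ?_ (hG i).1)
          exact (((hv (j+1)).continuous_fderiv one_ne_zero).clm_apply continuous_const).aestronglyMeasurable
        calc (∫⁻ z, ‖fderiv ℝ (fun y => v (j + 1) y - v j y) z (EuclideanSpace.single i 1)‖ₑ)
            ≤ ∫⁻ z, (‖fderiv ℝ (v (j+1)) z (EuclideanSpace.single i 1) - G i z‖ₑ +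
              ‖fderiv ℝ (v j) z (EuclideanSpace.single i 1) - G i z‖ₑ) := by
              refine lintegral_mono fun z => ?_
              rw [fderiv_fun_sub ((hv _).differentiable one_ne_zero z)
                ((hv _).differentiable one_ne_zero z)]
              refine le_trans (le_of_eq ?_) enorm_sub_le
              congr 1
              simp
          _ = _ := lintegral_add_left' hm _
          _ ≤ ENNReal.ofReal ((1 / 4) ^ (j + 1)) + ENNReal.ofReal ((1 / 4) ^ j) :=
              add_le_add (hvG _ i) (hvG _ i)
          _ ≤ _ := by
              rw [← ENNReal.ofReal_add (by positivity) (by positivity)]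
              refine ENNReal.ofReal_le_ofReal ?_
              have : (1 / 4 : ℝ) ^ (j + 1) ≤ (1 / 4) ^ j :=
                pow_le_pow_of_le_one (by norm_num) (by norm_num) (by omega)
              linarith
      have hdc : Continuous (fun z => fderiv ℝ (fun y => v (j + 1) y - v j y) z) :=
        ((hv (j+1)).sub (hv j)).continuous_fderiv one_ne_zero
      calc (∫⁻ z, ‖fderiv ℝ (fun y => v (j + 1) y - v j y) z‖ₑ)
          ≤ ∫⁻ z, ∑ i, ‖fderiv ℝ (fun y => v (j + 1) y - v j y) z (EuclideanSpace.single i 1)‖ₑ :=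
            lintegral_mono fun z => enorm_fderiv_le _
        _ = ∑ i, ∫⁻ z, ‖fderiv ℝ (fun y => v (j + 1) y - v j y) z (EuclideanSpace.single i 1)‖ₑ :=
            lintegral_finsetSum _ fun i _ =>
              (hdc.clm_apply continuous_const).enorm.measurable
        _ ≤ ∑ i : Fin n, ENNReal.ofReal (2 * (1 / 4) ^ j) := Finset.sum_le_sum fun i _ => hone i
        _ = ENNReal.ofReal (n * (2 * (1 / 4) ^ j)) := by
            rw [Finset.sum_const, Finset.card_univ, Fintype.card_fin, nsmul_eq_mul,
              ENNReal.ofReal_mul (p := (n:ℝ)) (by positivity), ENNReal.ofReal_natCast]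
        _ < _ := by
            have : (0:ℝ) < (1 / 4) ^ j := by positivity
            refine (ENNReal.ofReal_lt_ofReal_iff (by positivity)).2 ?_
            linarith
    have h := hC (fun y => v (j + 1) y - v j y) ((hv _).sub (hv _)) ((hvc _).sub (hvc _))
      ((1 / 2) ^ j) ((2 * n + 1) * (1 / 4) ^ j) (by positivity) hgr
    refine h.trans_eq ?_
    congr 2
    rw [mul_div_assoc, ← div_pow]
    norm_num
  have hsub : ∀ J, {x | ∀ M : ℕ, ∃ r, 0 < r ∧ r ≤ 1 ∧
      (M : ℝ≥0∞) * volume (ball x r) < ∫⁻ y in ball x r, ‖F y‖ₑ} ⊆ ⋃ k, A (J + k) := by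
    intro J x hx
    by_contra hcon
    obtain ⟨M0, hM0⟩ := (hvc J).exists_bound_of_continuous (hv J).continuous
    obtain ⟨M, hM⟩ := exists_nat_ge (M0 + 10)
    obtain ⟨r, hr0, hr1, hr⟩ := hx M
    refine absurd hr (not_lt.2 ?_)
    refine (avg_bound F v (fun j => (hv j).continuous) hvF J M0 hM0 x r ?_).trans ?_
    · intro j hj
      refine not_lt.1 fun hlt => hcon (mem_iUnion.2 ⟨j - J, ?_⟩)
      rw [Nat.add_sub_cancel' hj]
      exact ⟨r, hr0, hr1, hlt⟩
    · refine mul_le_mul_left ?_ _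
      rw [← ENNReal.ofReal_natCast]
      exact ENNReal.ofReal_le_ofReal hM
  have hbd : ∀ J : ℕ, hcont n {x | ∀ M : ℕ, ∃ r, 0 < r ∧ r ≤ 1 ∧
      (M : ℝ≥0∞) * volume (ball x r) < ∫⁻ y in ball x r, ‖F y‖ₑ} ≤
      C * ENNReal.ofReal ((2 * n + 1) * 2 * (1 / 2) ^ J) := by
    intro J
    calc _ ≤ ∑' k, hcont n (A (J + k)) := (measure_mono (hsub J)).trans (measure_iUnion_le _)
      _ ≤ ∑' k, C * ENNReal.ofReal ((2 * n + 1) * (1 / 2) ^ (J + k)) :=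
          ENNReal.tsum_le_tsum fun k => hAle _
      _ = C * ∑' k, ENNReal.ofReal (((2 * n + 1) * (1 / 2) ^ J) * (1 / 2) ^ k) := by
          rw [ENNReal.tsum_mul_left]
          simp_rw [pow_add, mul_assoc]
      _ = _ := by
          rw [← ENNReal.ofReal_tsum_of_nonneg (fun k => by positivity)
            (summable_geometric_two.mul_left _), tsum_mul_left, tsum_geometric_two]
          congr 2; ring
  have hlim : Tendsto (fun J : ℕ => C * ENNReal.ofReal ((2 * n + 1) * 2 * (1 / 2) ^ J)) atTop
      (𝓝 (C * ENNReal.ofReal ((2 * n + 1) * 2 * 0))) := by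
    refine ENNReal.Tendsto.const_mul (ENNReal.tendsto_ofReal ?_) (Or.inr hCt)
    exact (tendsto_pow_atTop_nhds_zero_of_lt_one (by norm_num) (by norm_num)).const_mul _
  simpa using ge_of_tendsto' hlim hbd

lemma integrable_mul_supp {n : ℕ} (u ψ : En n → ℝ) (K : Set (En n)) (hK : IsCompact K)
    (hu : IntegrableOn u K) (hψ : Continuous ψ) (h0 : ∀ x ∉ K, ψ x = 0) :
    Integrable (fun x => u x * ψ x) := by
  have h1 : IntegrableOn (fun x => u x * ψ x) K := hu.mul_continuousOn hψ.continuousOn hK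
  refine (integrableOn_iff_integrable_of_support_subset ?_).1 h1
  intro x hx
  by_contra hxK
  exact hx (by simp [h0 x hxK])

lemma cutoff {n : ℕ} (Ω : Set (En n)) (p : En n) (ρ : ℝ) (hρ : 0 < ρ)
    (hΩ : closedBall p (2 * ρ) ⊆ Ω) (u : En n → ℝ) (du : Fin n → En n → ℝ)
    (hu : IntegrableOn u (closedBall p (2 * ρ)))
    (hdu : ∀ i, IntegrableOn (du i) (closedBall p (2 * ρ)))
    (hw : ∀ i, HasWeakPartialOn Ω u (du i) (EuclideanSpace.single i 1)) :
    ∃ (F : En n → ℝ) (G : Fin n → En n → ℝ), Integrable F ∧ HasCompactSupport F ∧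
      (∀ i, Integrable (G i)) ∧
      (∀ i, HasWeakPartialOn univ F (G i) (EuclideanSpace.single i 1)) ∧
      (∀ x ∈ ball p ρ, F x = u x) ∧ (∀ x ∈ ball p ρ, ∀ i, G i x = du i x) := by
  let χ : ContDiffBump p := ⟨ρ, 2 * ρ, hρ, by linarith⟩
  have hts : tsupport χ = closedBall p (2 * ρ) := χ.tsupport_eq
  have hK : IsCompact (closedBall p (2 * ρ)) := isCompact_closedBall _ _
  have hχ0 : ∀ x ∉ closedBall p (2 * ρ), χ x = 0 := fun x hx =>
    image_eq_zero_of_notMem_tsupport (by rwa [hts])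
  have hχs : ContDiff ℝ (⊤ : ℕ∞) χ := χ.contDiff
  have hχd : Differentiable ℝ χ := hχs.differentiable (by simp)
  have hχ'c : ∀ e, Continuous (fun x => fderiv ℝ χ x e) := fun e =>
    (hχs.continuous_fderiv (by simp)).clm_apply continuous_const
  have hχ'0 : ∀ e, ∀ x ∉ closedBall p (2 * ρ), fderiv ℝ χ x e = 0 := by
    intro e x hx
    have : fderiv ℝ χ x = 0 := by
      have := support_fderiv_subset ℝ (f := χ)
      rw [hts] at this
      by_contra hne
      exact hx (this hne)
    simp [this]
  refine ⟨fun x => u x * χ x, fun i x => du i x * χ x + u x * fderiv ℝ χ x (EuclideanSpace.single i 1),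
    integrable_mul_supp u χ _ hK hu χ.continuous hχ0, ?_, ?_, ?_, ?_, ?_⟩
  · exact χ.hasCompactSupport.mul_left
  · intro i
    exact (integrable_mul_supp (du i) χ _ hK (hdu i) χ.continuous hχ0).add
      (integrable_mul_supp u _ _ hK hu (hχ'c _) (hχ'0 _))
  · intro i η hη
    obtain ⟨hη1, hη2, -⟩ := hη
    set e : En n := EuclideanSpace.single i 1
    have hηd : Differentiable ℝ η := hη1.differentiable (by simp)
    have hηc : Continuous η := hη1.continuous
    have hη'c : Continuous (fun x => fderiv ℝ η x e) :=
      (hη1.continuous_fderiv (by simp)).clm_apply continuous_const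
    have key := hw i (fun x => χ x * η x) ⟨hχs.mul hη1, χ.hasCompactSupport.mul_right, by
      refine (closure_mono ?_).trans (hts.subset.trans hΩ)
      exact Function.support_mul_subset_left _ _⟩
    have hfd : ∀ x, fderiv ℝ (fun x => χ x * η x) x e = χ x * fderiv ℝ η x e + fderiv ℝ χ x e * η x := by
      intro x
      rw [fderiv_fun_mul (hχd x) (hηd x)]
      simp [mul_comm]
    change ∫ x, u x * fderiv ℝ (fun x => χ x * η x) x e = - ∫ x, du i x * (χ x * η x) at key
    change ∫ x, (u x * χ x) * fderiv ℝ η x e = - ∫ x, (du i x * χ x + u x * fderiv ℝ χ x e) * η x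
    simp_rw [hfd, mul_add] at key
    have i1 : Integrable (fun x => u x * (χ x * fderiv ℝ η x e)) :=
      integrable_mul_supp u _ _ hK hu (χ.continuous.mul hη'c) fun x hx => by simp [hχ0 x hx]
    have i2 : Integrable (fun x => u x * (fderiv ℝ χ x e * η x)) :=
      integrable_mul_supp u _ _ hK hu ((hχ'c e).mul hηc) fun x hx => by simp [hχ'0 e x hx]
    have i3 : Integrable (fun x => du i x * (χ x * η x)) :=
      integrable_mul_supp _ _ _ hK (hdu i) (χ.continuous.mul hηc) fun x hx => by simp [hχ0 x hx]
    rw [integral_add i1 i2] at key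
    simp_rw [add_mul, mul_assoc]
    rw [integral_add i3 i2]
    linarith
  · intro x hx
    have : χ x = 1 := χ.one_of_mem_closedBall (ball_subset_closedBall hx)
    simp [this]
  · intro x hx i
    have h1 : χ x = 1 := χ.one_of_mem_closedBall (ball_subset_closedBall hx)
    have h2 : fderiv ℝ χ x = 0 := by
      have : (χ : En n → ℝ) =ᶠ[𝓝 x] fun _ => (1:ℝ) := by
        filter_upwards [isOpen_ball.mem_nhds hx] with y hy
        exact χ.one_of_mem_closedBall (ball_subset_closedBall hy)
      rw [this.fderiv_eq]
      simp
    simp [h1, h2]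

lemma le_of_eps (a b K : ℝ≥0∞) (hK : K ≠ ∞) (h : ∀ ε : ℝ≥0∞, ε ≠ 0 → ε ≠ ∞ → a ≤ b + K * ε) : a ≤ b := by
  refine ENNReal.le_of_forall_pos_le_add fun ε hε _ => ?_
  refine (h (ε / (K + 1)) (ENNReal.div_pos (by exact_mod_cast hε.ne') (by simp [hK])).ne'
    (ENNReal.div_ne_top (by simp) (by simp))).trans ?_
  refine add_le_add_right ?_ _
  calc K * (ε / (K + 1)) ≤ (K + 1) * (ε / (K + 1)) := mul_le_mul_left le_self_add _
    _ ≤ ε := ENNReal.mul_div_le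

lemma poincare_W {n : ℕ} (F : En n → ℝ) (G : Fin n → En n → ℝ) (hF : Integrable F)
    (hFc : HasCompactSupport F) (hG : ∀ i, Integrable (G i))
    (hw : ∀ i, HasWeakPartialOn univ F (G i) (EuclideanSpace.single i 1)) (x : En n) (r : ℝ) :
    ∫⁻ y in ball x r, ∫⁻ z in ball x r, ‖F y - F z‖ₑ ≤
      ENNReal.ofReal (2 * r) * 2 ^ n * volume (ball x r) * ∑ i, ∫⁻ p in ball x r, ‖G i p‖ₑ := by
  set B := ball x r with hB
  set V := volume B with hV
  have hVt : V ≠ ∞ := measure_ball_lt_top.ne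
  set c := ENNReal.ofReal (2 * r) * 2 ^ n * V with hc
  have hct : c ≠ ∞ := ENNReal.mul_ne_top (ENNReal.mul_ne_top ENNReal.ofReal_ne_top (by simp)) hVt
  refine le_of_eps _ _ (c * n + 2 * V)
    (ENNReal.add_ne_top.2 ⟨ENNReal.mul_ne_top hct (by simp), ENNReal.mul_ne_top (by simp) hVt⟩) ?_
  intro ε hε hεt
  obtain ⟨v, hv, hvc, hvF, hvG⟩ := exists_smooth F G hF hFc hG hw ε hε
  have hP := poincare_C1 v hv x r
  have hm : AEMeasurable (fun y => ‖v y - F y‖ₑ) := by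
    exact (hv.continuous.aestronglyMeasurable.sub hF.1).enorm
  have hgrad : (∫⁻ p in B, ‖fderiv ℝ v p‖ₑ) ≤ (∑ i, ∫⁻ p in B, ‖G i p‖ₑ) + n * ε := by
    have hdc : Continuous (fderiv ℝ v) := hv.continuous_fderiv one_ne_zero
    calc (∫⁻ p in B, ‖fderiv ℝ v p‖ₑ) ≤ ∫⁻ p in B, ∑ i, ‖fderiv ℝ v p (EuclideanSpace.single i 1)‖ₑ :=
          lintegral_mono fun p => enorm_fderiv_le _
      _ = ∑ i, ∫⁻ p in B, ‖fderiv ℝ v p (EuclideanSpace.single i 1)‖ₑ :=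
          lintegral_finsetSum _ fun i _ => (hdc.clm_apply continuous_const).enorm.measurable
      _ ≤ ∑ i, ((∫⁻ p in B, ‖G i p‖ₑ) + ε) := by
          refine Finset.sum_le_sum fun i _ => ?_
          calc (∫⁻ p in B, ‖fderiv ℝ v p (EuclideanSpace.single i 1)‖ₑ)
              ≤ ∫⁻ p in B, (‖G i p‖ₑ + ‖fderiv ℝ v p (EuclideanSpace.single i 1) - G i p‖ₑ) := by
                refine lintegral_mono fun p => ?_
                refine le_trans (le_of_eq ?_) (enorm_add_le _ _)
                congr 1; ring
            _ = (∫⁻ p in B, ‖G i p‖ₑ) + _ := lintegral_add_left' (hG i).1.enorm.restrict _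
            _ ≤ _ := add_le_add_right ((setLIntegral_le_lintegral _ _).trans (hvG i)) _
      _ = _ := by simp [Finset.sum_add_distrib]
  have hin : ∀ y, (∫⁻ z in B, ‖F y - F z‖ₑ) ≤
      ((∫⁻ z in B, ‖v y - v z‖ₑ) + ε) + V * ‖v y - F y‖ₑ := by
    intro y
    calc (∫⁻ z in B, ‖F y - F z‖ₑ)
        ≤ ∫⁻ z in B, ((‖v y - v z‖ₑ + ‖v z - F z‖ₑ) + ‖v y - F y‖ₑ) := by
          refine lintegral_mono fun z => ?_
          calc ‖F y - F z‖ₑ = ‖((v y - v z) + (v z - F z)) - (v y - F y)‖ₑ := by congr 1; ring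
            _ ≤ _ := enorm_sub_le.trans (add_le_add_left (enorm_add_le _ _) _)
      _ = ((∫⁻ z in B, ‖v y - v z‖ₑ) + ∫⁻ z in B, ‖v z - F z‖ₑ) + V * ‖v y - F y‖ₑ := by
          have m1 : Measurable (fun z => ‖v y - v z‖ₑ) :=
            (continuous_const.sub hv.continuous).enorm.measurable
          rw [lintegral_add_right _ measurable_const, lintegral_add_left m1]
          simp [hV, mul_comm]
      _ ≤ _ := by
          gcongr
          exact (setLIntegral_le_lintegral _ _).trans hvF
  calc (∫⁻ y in B, ∫⁻ z in B, ‖F y - F z‖ₑ)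
      ≤ ∫⁻ y in B, (((∫⁻ z in B, ‖v y - v z‖ₑ) + ε) + V * ‖v y - F y‖ₑ) := lintegral_mono hin
    _ = (∫⁻ y in B, ∫⁻ z in B, ‖v y - v z‖ₑ) + ε * V + V * ∫⁻ y in B, ‖v y - F y‖ₑ := by
        rw [lintegral_add_right' _ (hm.restrict.const_mul _), lintegral_add_right _ measurable_const,
          lintegral_const_mul' _ _ hVt]
        simp [hV]
    _ ≤ c * ((∑ i, ∫⁻ p in B, ‖G i p‖ₑ) + n * ε) + ε * V + V * ε := by
        refine add_le_add (add_le_add_left (hP.trans (mul_le_mul_right hgrad _)) _) ?_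
        exact mul_le_mul_right ((setLIntegral_le_lintegral _ _).trans hvF) _
    _ = _ := by ring

lemma avg_diff {n : ℕ} (f : En n → ℝ) (x y : En n) (r s : ℝ) (hs : 0 < s) (hr : 0 < r)
    (hsub : ball y s ⊆ ball x r) (hf : IntegrableOn f (ball x r)) :
    ‖ballAvg f y s - ballAvg f x r‖ₑ * (volume (ball y s) * volume (ball x r)) ≤
      ∫⁻ y in ball x r, ∫⁻ z in ball x r, ‖f y - f z‖ₑ := by
  have hb : 0 < volume.real (ball x r) :=
    ENNReal.toReal_pos (measure_ball_pos _ _ hr).ne' measure_ball_lt_top.ne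
  have hb' : 0 < volume.real (ball y s) :=
    ENNReal.toReal_pos (measure_ball_pos _ _ hs).ne' measure_ball_lt_top.ne
  have hf' : IntegrableOn f (ball y s) := hf.mono_set hsub
  have hci : ∀ (c : ℝ) (p : En n) (t : ℝ), Integrable (fun _ : En n => c) (volume.restrict (ball p t)) :=
    fun c p t => integrableOn_const measure_ball_lt_top.ne
  have hin : ∀ w, ∫ z in ball x r, (f w - f z) = f w * volume.real (ball x r) - ∫ z in ball x r, f z := by
    intro w
    rw [integral_sub (hci _ _ _) hf, setIntegral_const]
    simp [mul_comm]
  have hout : ∫ w in ball y s, ∫ z in ball x r, (f w - f z) =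
      (ballAvg f y s - ballAvg f x r) * (volume.real (ball y s) * volume.real (ball x r)) := by
    simp_rw [hin]
    rw [integral_sub (Integrable.mul_const hf' _) (hci _ _ _),
      setIntegral_const, integral_mul_const, ballAvg, ballAvg, setAverage_eq, setAverage_eq]
    simp only [smul_eq_mul]
    field_simp
  calc _ = ‖∫ w in ball y s, ∫ z in ball x r, (f w - f z)‖ₑ := by
        rw [hout, enorm_mul, enorm_mul]
        congr 2 <;>
        · rw [← ofReal_norm, Real.norm_of_nonneg measureReal_nonneg, ofReal_measureReal measure_ball_lt_top.ne]
    _ ≤ ∫⁻ w in ball y s, ∫⁻ z in ball x r, ‖f w - f z‖ₑ :=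
        (enorm_integral_le_lintegral_enorm _).trans
          (lintegral_mono fun w => enorm_integral_le_lintegral_enorm _)
    _ ≤ _ := lintegral_mono_set hsub

lemma lim_of_dyadic (a : ℝ → ℝ) (Λ ρ : ℝ) (hρ : 0 < ρ) (hΛ : 0 ≤ Λ)
    (h : ∀ r s, 0 < r → r ≤ ρ → r / 2 ≤ s → s ≤ r → |a s - a r| ≤ Λ * r) :
    ∃ L, Tendsto a (𝓝[>] 0) (𝓝 L) ∧ ∀ r, 0 < r → r ≤ ρ → |L - a r| ≤ 2 * Λ * r := by
  have h1 : ∀ m : ℕ, ∀ r s, 0 < r → r ≤ ρ → r / 2 ^ m ≤ s → s ≤ r → |a s - a r| ≤ 2 * Λ * r := by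
    intro m
    induction m with
    | zero =>
      intro r s hr hrρ h1 h2
      have : s = r := le_antisymm h2 (by simpa using h1)
      subst this
      simp; positivity
    | succ m ih =>
      intro r s hr hrρ h1 h2
      rcases le_or_gt (r / 2) s with h3 | h3
      · have := h r s hr hrρ h3 h2
        have : 0 ≤ Λ * r := by positivity
        linarith
      · have e1 := ih (r / 2) s (by positivity) (by linarith)
          (by rw [div_div, ← pow_succ']; exact h1) h3.le
        have e2 := h r (r / 2) hr hrρ le_rfl (by linarith)
        have := abs_sub_le (a s) (a (r / 2)) (a r)
        linarith
  have h2 : ∀ r s, 0 < s → s ≤ r → r ≤ ρ → |a s - a r| ≤ 2 * Λ * r := by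
    intro r s hs hsr hr
    obtain ⟨m, hm⟩ := pow_unbounded_of_one_lt (r / s) (one_lt_two)
    refine h1 m r s (by linarith) hr ?_ hsr
    rw [div_lt_iff₀ hs] at hm
    rw [div_le_iff₀ (by positivity)]
    linarith
  have hC : Cauchy (map a (𝓝[>] 0)) := by
    rw [Metric.cauchy_iff]
    refine ⟨inferInstance, fun ε hε => ?_⟩
    set δ := min ρ (ε / (2 * Λ + 1)) with hδ
    have hδ0 : 0 < δ := lt_min hρ (by positivity)
    refine ⟨a '' Ioc 0 δ, image_mem_map (Ioc_mem_nhdsGT hδ0), ?_⟩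
    have hb : ∀ r s, 0 < s → s ≤ r → r ≤ δ → |a s - a r| < ε := by
      intro r s hs hsr hr
      refine (h2 r s hs hsr (hr.trans (min_le_left _ _))).trans_lt ?_
      have h3 : r ≤ ε / (2 * Λ + 1) := hr.trans (min_le_right _ _)
      rw [le_div_iff₀ (by positivity)] at h3
      nlinarith
    rintro _ ⟨r, hr, rfl⟩ _ ⟨s, hs, rfl⟩
    rw [Real.dist_eq]
    rcases le_total r s with h4 | h4
    · exact hb s r hr.1 h4 hs.2
    · rw [abs_sub_comm]; exact hb r s hs.1 h4 hr.2
  obtain ⟨L, hL⟩ := cauchy_map_iff_exists_tendsto.1 hC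
  refine ⟨L, hL, fun r hr hrρ => ?_⟩
  refine le_of_tendsto ((hL.sub_const (a r)).abs) ?_
  filter_upwards [Ioc_mem_nhdsGT hr] with s hs
  exact h2 r s hs.1 hs.2 hrρ

lemma preciseRep_eq {n : ℕ} (f : En n → ℝ) (x : En n) (L : ℝ)
    (h : Tendsto (fun r => ballAvg f x r) (𝓝[>] 0) (𝓝 L)) : preciseRep f x = L := by
  have hex : ∃ L : ℝ, Tendsto (fun r => ballAvg f x r) (nhdsWithin 0 (Set.Ioi 0)) (nhds L) := ⟨L, h⟩
  rw [preciseRep, dif_pos hex]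
  exact tendsto_nhds_unique hex.choose_spec h

lemma avg_osc {n : ℕ} (Ω : Set (En n)) (f : En n → ℝ) (g : En n → En n)
    (hw : HasWeakGradientOn Ω f g) (x : En n) (ρ : ℝ) (hρ : 0 < ρ) (hΩ : closedBall x (2 * ρ) ⊆ Ω)
    (hf : IntegrableOn f (closedBall x (2 * ρ))) (hg : IntegrableOn g (closedBall x (2 * ρ)))
    (k : ℕ) (hk : ∀ r, 0 < r → r ≤ ρ → (∫⁻ y in ball x r, ‖g y‖ₑ) ≤ k * volume (ball x r))
    (r s : ℝ) (y : En n) (hr : 0 < r) (hrρ : r ≤ ρ) (hs : r / 2 ≤ s) (hsub : ball y s ⊆ ball x r) :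
    |ballAvg f y s - ballAvg f x r| ≤ (2 * 4 ^ n * n * k) * r := by
  have hgi : ∀ i, IntegrableOn (fun x => g x i) (closedBall x (2 * ρ)) := fun i =>
    (EuclideanSpace.proj (𝕜 := ℝ) i : En n →L[ℝ] ℝ).integrable_comp hg
  obtain ⟨F, G, hF, hFc, hG, hFG, hFe, hGe⟩ := cutoff Ω x ρ hρ hΩ f (fun i x => g x i) hf hgi hw
  have hP := poincare_W F G hF hFc hG hFG x r
  have hBB : ball x r ⊆ ball x ρ := ball_subset_ball hrρ
  have hs0 : 0 < s := by linarith
  have hA := avg_diff f x y r s hs0 hr hsub (hf.mono_set ((ball_subset_closedBall).trans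
    (closedBall_subset_closedBall (by linarith))))
  have hL : ∫⁻ y in ball x r, ∫⁻ z in ball x r, ‖f y - f z‖ₑ =
      ∫⁻ y in ball x r, ∫⁻ z in ball x r, ‖F y - F z‖ₑ := by
    refine setLIntegral_congr_fun measurableSet_ball fun y hy => ?_
    refine setLIntegral_congr_fun measurableSet_ball fun z hz => ?_
    rw [hFe y (hBB hy), hFe z (hBB hz)]
  have hsum : ∑ i, ∫⁻ p in ball x r, ‖G i p‖ₑ ≤ n * (k * volume (ball x r)) := by
    calc _ ≤ ∑ i : Fin n, (k * volume (ball x r)) := by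
          refine Finset.sum_le_sum fun i _ => le_trans ?_ (hk r hr hrρ)
          refine setLIntegral_mono' measurableSet_ball fun z hz => ?_
          rw [hGe z (hBB hz)]
          rw [← ofReal_norm, ← ofReal_norm]
          exact ENNReal.ofReal_le_ofReal (PiLp.norm_apply_le _ _)
      _ = _ := by simp
  rw [hL] at hA
  set V := volume (ball x r) with hV
  set W := volume (ball y s) with hW
  have hV0 : V ≠ 0 := (measure_ball_pos _ _ hr).ne'
  have hVt : V ≠ ∞ := measure_ball_lt_top.ne
  have hW0 : W ≠ 0 := (measure_ball_pos _ _ hs0).ne'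
  have hWt : W ≠ ∞ := measure_ball_lt_top.ne
  have hVW : V ≤ 2 ^ n * W := by
    rw [hV, hW, vol_ball_eq x hr, vol_ball_eq y hs0, ← mul_assoc]
    refine mul_le_mul_left ?_ _
    rw [show (2 : ℝ≥0∞) = ENNReal.ofReal 2 by simp, ← ENNReal.ofReal_pow (by norm_num),
      ← ENNReal.ofReal_mul (by positivity), ← mul_pow]
    exact ENNReal.ofReal_le_ofReal (pow_le_pow_left₀ hr.le (by linarith) _)
  have h1 : ‖ballAvg f y s - ballAvg f x r‖ₑ * (W * V) ≤
      ENNReal.ofReal (2 * 4 ^ n * n * k * r) * (W * V) := by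
    calc _ ≤ _ := hA.trans hP
      _ ≤ ENNReal.ofReal (2 * r) * 2 ^ n * V * (n * (k * (2 ^ n * W))) := by
          refine mul_le_mul_right (hsum.trans ?_) _
          gcongr
      _ = _ := by
          rw [show 2 * 4 ^ n * n * k * r = (2 * r) * ((2 ^ n * 2 ^ n) * (n * k)) by
            rw [← mul_pow]; norm_num; ring]
          rw [ENNReal.ofReal_mul (p := 2 * r) (by positivity),
            ENNReal.ofReal_mul (p := 2 ^ n * 2 ^ n) (by positivity),
            ENNReal.ofReal_mul (p := 2 ^ n) (by positivity),
            ENNReal.ofReal_mul (p := (n:ℝ)) (by positivity),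
            ENNReal.ofReal_natCast, ENNReal.ofReal_natCast, ENNReal.ofReal_pow (by norm_num)]
          simp only [ENNReal.ofReal_ofNat]
          ring
  have h2 := (ENNReal.mul_le_mul_iff_left (mul_ne_zero hW0 hV0) (ENNReal.mul_ne_top hWt hVt)).1 h1
  rw [← ofReal_norm] at h2
  exact (ENNReal.ofReal_le_ofReal_iff (by positivity)).1 h2

lemma cap_empty' {n : ℕ} : cap (n := n) 1 ∅ = 0 := by
  rw [← nonpos_iff_eq_zero]
  refine (iInf₂_le (∅ : Set (En n)) ⟨Subset.rfl, isOpen_empty⟩).trans ?_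
  refine iSup₂_le fun F hF => ?_
  refine (iInf₂_le (fun _ => (0:ℝ)) ⟨contDiff_const, HasCompactSupport.zero, fun x hx =>
    absurd (hF.1 hx) (notMem_empty x)⟩).trans ?_
  simp

lemma integrableOn_of_rpow {n m : ℕ} (g : En n → En m) (hg : AEStronglyMeasurable g volume)
    (K : Set (En n)) (h : IntegrableOn (fun x => ‖g x‖ ^ (1:ℝ)) K) : IntegrableOn g K := by
  simp_rw [Real.rpow_one] at h
  exact (integrable_norm_iff hg.restrict).1 h

lemma integrableOn_of_rpow' {n : ℕ} (g : En n → ℝ) (hg : AEStronglyMeasurable g volume)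
    (K : Set (En n)) (h : IntegrableOn (fun x => |g x| ^ (1:ℝ)) K) : IntegrableOn g K := by
  simp_rw [Real.rpow_one] at h
  exact (integrable_norm_iff hg.restrict).1 h

lemma closed_avg {n : ℕ} (g : En n → En n) (hg : AEStronglyMeasurable g volume) (k : ℕ) (ρ : ℝ) :
    IsClosed {x : En n | ∀ r, 0 < r → r ≤ ρ →
      (∫⁻ y in ball x r, ‖g y‖ₑ) ≤ k * volume (ball x r)} := by
  refine isClosed_of_closure_subset fun x hx r hr hrρ => ?_
  obtain ⟨u, hu, hlim⟩ := mem_closure_iff_seq_limit.1 hx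
  calc (∫⁻ y in ball x r, ‖g y‖ₑ) = ∫⁻ y, (ball x r).indicator (fun y => ‖g y‖ₑ) y :=
        (lintegral_indicator measurableSet_ball _).symm
    _ ≤ ∫⁻ y, liminf (fun j => (ball (u j) r).indicator (fun y => ‖g y‖ₑ) y) atTop := by
        refine lintegral_mono fun y => ?_
        by_cases hy : y ∈ ball x r
        · refine le_liminf_of_le (by isBoundedDefault) ?_
          have h1 : Tendsto (fun j => dist y (u j)) atTop (𝓝 (dist y x)) :=
            tendsto_const_nhds.dist hlim
          filter_upwards [h1.eventually_lt_const (mem_ball.1 hy)] with j hj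
          rw [indicator_of_mem hy, indicator_of_mem (mem_ball.2 hj)]
        · rw [indicator_of_notMem hy]; exact zero_le
    _ ≤ liminf (fun j => ∫⁻ y, (ball (u j) r).indicator (fun y => ‖g y‖ₑ) y) atTop :=
        lintegral_liminf_le' fun j => hg.enorm.indicator measurableSet_ball
    _ ≤ liminf (fun _ : ℕ => (k : ℝ≥0∞) * volume (ball x r)) atTop := by
        refine liminf_le_liminf (Eventually.of_forall fun j => ?_)
        rw [lintegral_indicator measurableSet_ball, vol_ball_eq x hr, ← vol_ball_eq (u j) hr]
        exact hu j r hr hrρ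
    _ = _ := liminf_const _

lemma enorm_le_sum {n : ℕ} (x : En n) : ‖x‖ₑ ≤ ∑ i, ‖x i‖ₑ := by
  have hx : x = ∑ i, x i • EuclideanSpace.single i (1:ℝ) := by
    ext j
    simp [Finset.sum_apply, Pi.single_apply]
  conv_lhs => rw [hx]
  refine (enorm_sum_le _ _).trans (Finset.sum_le_sum fun i _ => ?_)
  rw [enorm_smul, ← ofReal_norm (EuclideanSpace.single i (1:ℝ))]
  simp

def Kset {n : ℕ} (Ω : Set (En n)) (R d : ℝ) : Set (En n) :=
  {x | ‖x‖ ≤ R ∧ ∀ y ∉ Ω, d ≤ dist x y}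

lemma Kset_closed {n : ℕ} (Ω : Set (En n)) (R d : ℝ) : IsClosed (Kset Ω R d) := by
  have : Kset Ω R d = {x | ‖x‖ ≤ R} ∩ ⋂ y ∈ Ωᶜ, {x | d ≤ dist x y} := by
    ext x; simp [Kset]
  rw [this]
  refine (isClosed_le continuous_norm continuous_const).inter ?_
  exact isClosed_biInter fun y _ => isClosed_le continuous_const (continuous_id.dist continuous_const)

lemma Kset_compact {n : ℕ} (Ω : Set (En n)) (R d : ℝ) : IsCompact (Kset Ω R d) := by
  refine (isCompact_closedBall (0 : En n) R).of_isClosed_subset (Kset_closed _ _ _) fun x hx => ?_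
  simpa using hx.1

lemma Kset_sub {n : ℕ} (Ω : Set (En n)) (R d : ℝ) (hd : 0 < d) : Kset Ω R d ⊆ Ω := by
  intro x hx
  by_contra h
  have := hx.2 x h
  rw [dist_self] at this
  linarith

lemma Kset_ball {n : ℕ} (Ω : Set (En n)) (R ρ : ℝ) (hρ1 : ρ ≤ 1) (x : En n)
    (hx : x ∈ Kset Ω R (3 * ρ)) : closedBall x (2 * ρ) ⊆ Kset Ω (R + 2) ρ := by
  intro z hz
  rw [mem_closedBall] at hz
  refine ⟨?_, fun y hy => ?_⟩
  · have h1 := norm_le_norm_add_norm_sub' z x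
    rw [← dist_eq_norm] at h1
    linarith [hx.1]
  · have h1 := dist_triangle_left x y z
    linarith [hx.2 y hy]

lemma lip_part {n : ℕ} (Ω : Set (En n)) (f : En n → ℝ) (g : En n → En n)
    (hw : HasWeakGradientOn Ω f g)
    (hf : ∀ K ⊆ Ω, IsCompact K → IntegrableOn f K) (hg : ∀ K ⊆ Ω, IsCompact K → IntegrableOn g K)
    (ρ R : ℝ) (hρ : 0 < ρ) (hρ1 : ρ ≤ 1) (k : ℕ) (S : Set (En n)) (hS : S ⊆ Kset Ω R (3 * ρ))
    (hk : ∀ x ∈ S, ∀ r, 0 < r → r ≤ ρ → (∫⁻ y in ball x r, ‖g y‖ₑ) ≤ k * volume (ball x r)) :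
    ∃ K : ℝ≥0, LipschitzOnWith K (preciseRep f) S := by
  have hball : ∀ x ∈ S, closedBall x (2 * ρ) ⊆ Kset Ω (R + 2) ρ := fun x hx =>
    Kset_ball Ω R ρ hρ1 x (hS hx)
  have hball' : ∀ x ∈ S, closedBall x (2 * ρ) ⊆ Ω := fun x hx =>
    (hball x hx).trans (Kset_sub _ _ _ hρ)
  set Λ : ℝ := 2 * 4 ^ n * n * k with hΛ
  have hΛ0 : 0 ≤ Λ := by positivity
  have hosc : ∀ x ∈ S, ∀ (r s : ℝ) (y : En n), 0 < r → r ≤ ρ → r / 2 ≤ s → ball y s ⊆ ball x r →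
      |ballAvg f y s - ballAvg f x r| ≤ Λ * r := fun x hx r s y hr hrρ hs hsub =>
    avg_osc Ω f g hw x ρ hρ (hball' x hx) (hf _ (hball' x hx) (isCompact_closedBall _ _))
      (hg _ (hball' x hx) (isCompact_closedBall _ _)) k (hk x hx) r s y hr hrρ hs hsub
  have hrep : ∀ x ∈ S, ∀ r, 0 < r → r ≤ ρ → |preciseRep f x - ballAvg f x r| ≤ 2 * Λ * r := by
    intro x hx
    obtain ⟨L, hL, hLr⟩ := lim_of_dyadic (fun r => ballAvg f x r) Λ ρ hρ hΛ0
      (fun r s hr hrρ h1 h2 => hosc x hx r s x hr hrρ h1 (ball_subset_ball h2))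
    rw [preciseRep_eq f x L hL]
    exact hLr
  set K' := Kset Ω (R + 2) ρ with hK'
  have hfK : IntegrableOn f K' := hf _ (Kset_sub _ _ _ hρ) (Kset_compact _ _ _)
  set b := volume.real (ball (0 : En n) ρ) with hb
  set I := ∫ z in K', ‖f z‖ with hI
  have hb0 : 0 < b := ENNReal.toReal_pos (measure_ball_pos _ _ hρ).ne' measure_ball_lt_top.ne
  have havg : ∀ x ∈ S, |ballAvg f x ρ| ≤ b⁻¹ * I := by
    intro x hx
    have hbx : volume.real (ball x ρ) = b := by
      rw [hb, measureReal_def, measureReal_def, vol_ball_eq x hρ, ← vol_ball_eq 0 hρ]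
    have hsub : ball x ρ ⊆ K' := (ball_subset_closedBall.trans
      (closedBall_subset_closedBall (by linarith))).trans (hball x hx)
    rw [ballAvg, setAverage_eq, hbx, smul_eq_mul, abs_mul, abs_of_pos (inv_pos.2 hb0)]
    refine mul_le_mul_of_nonneg_left ?_ (inv_pos.2 hb0).le
    have hni := norm_integral_le_integral_norm (μ := volume.restrict (ball x ρ)) f
    rw [Real.norm_eq_abs] at hni
    refine hni.trans ?_
    exact setIntegral_mono_set hfK.norm (Eventually.of_forall fun z => norm_nonneg _)
      (Eventually.of_forall hsub)
  have hI0 : 0 ≤ I := integral_nonneg fun z => norm_nonneg _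
  set M := b⁻¹ * I + 2 * Λ * ρ with hM
  have hM0 : 0 ≤ M := by positivity
  have hbd : ∀ x ∈ S, |preciseRep f x| ≤ M := by
    intro x hx
    have h1 := hrep x hx ρ hρ le_rfl
    have h2 := havg x hx
    have h3 := abs_sub_abs_le_abs_sub (preciseRep f x) (ballAvg f x ρ)
    linarith
  refine ⟨⟨8 * Λ + 4 * M / ρ, by positivity⟩, LipschitzOnWith.of_dist_le_mul fun x hx y hy => ?_⟩
  rw [Real.dist_eq]
  change _ ≤ (8 * Λ + 4 * M / ρ) * dist x y
  rcases (dist_nonneg (x := x) (y := y)).eq_or_lt with h0 | h0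
  · rw [← h0, dist_eq_zero.1 h0.symm]; simp
  rcases le_or_gt (2 * dist x y) ρ with h1 | h1
  · set d := dist x y with hd
    have e1 := hrep x hx (2 * d) (by linarith) h1
    have e2 := hrep y hy d h0 (by linarith)
    have e3 := hosc x hx (2 * d) d y (by linarith) h1 (by linarith) (by
      intro z hz
      rw [mem_ball] at hz ⊢
      have := dist_triangle z y x
      rw [dist_comm y x] at this
      linarith)
    have e4 : 0 ≤ 4 * M / ρ * d := by positivity
    have e5 : |preciseRep f x - preciseRep f y| ≤ |preciseRep f x - ballAvg f x (2 * d)| +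
        |ballAvg f y d - ballAvg f x (2 * d)| + |preciseRep f y - ballAvg f y d| := by
      rw [abs_sub_comm (ballAvg f y d), abs_sub_comm (preciseRep f y) (ballAvg f y d)]
      have := abs_sub_le (preciseRep f x) (ballAvg f x (2 * d)) (ballAvg f y d)
      have := abs_sub_le (preciseRep f x) (ballAvg f y d) (preciseRep f y)
      linarith
    linarith
  · have e1 := hbd x hx
    have e2 := hbd y hy
    have e3 := abs_sub (preciseRep f x) (preciseRep f y)
    have e4 : 0 ≤ 8 * Λ * dist x y := by positivity
    have e5 : 2 * M ≤ 4 * M / ρ * dist x y := by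
      rw [div_mul_eq_mul_div, le_div_iff₀ hρ]
      nlinarith
    linarith

lemma fix_partial {n : ℕ} (Ω : Set (En n)) (u w : En n → ℝ) (e : En n)
    (hu : ∀ K ⊆ Ω, IsCompact K → IntegrableOn u K) (hw : HasWeakPartialOn Ω u w e) :
    ∃ d : En n → ℝ, HasWeakPartialOn Ω u d e ∧ ∀ (p : En n) (R R' : ℝ), 0 < R → R < R' →
      closedBall p R' ⊆ Ω → IntegrableOn d (closedBall p R) := by
  by_cases hA : ∀ η, IsTest Ω η → Integrable (fun x => w x * η x)
  · refine ⟨w, hw, fun p R R' hR hRR' hsub => ?_⟩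
    let b : ContDiffBump p := ⟨R, R', hR, hRR'⟩
    have hb : IsTest Ω b := ⟨b.contDiff, b.hasCompactSupport, by
      rw [b.tsupport_eq]; exact hsub⟩
    refine ((hA b hb).integrableOn (s := closedBall p R)).congr_fun (fun x hx => ?_)
      measurableSet_closedBall
    simp only
    rw [b.one_of_mem_closedBall hx, mul_one]
  · push Not at hA
    obtain ⟨η0, h0, hni⟩ := hA
    refine ⟨fun _ => 0, fun η hη => ?_, fun p R R' _ _ _ => integrableOn_zero⟩
    have hint : ∀ η, IsTest Ω η → Integrable (fun x => u x * fderiv ℝ η x e) := fun η hη =>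
      integrable_mul_supp u _ (tsupport η) hη.2.1 (hu _ hη.2.2 hη.2.1)
        ((hη.1.continuous_fderiv (by simp)).clm_apply continuous_const) (fun x hx => by
          rw [fderiv_of_notMem_tsupport ℝ hx]; rfl)
    have hz : ∀ η, IsTest Ω η → ¬ Integrable (fun x => w x * η x) →
        ∫ x, u x * fderiv ℝ η x e = 0 := fun η hη hn => by
      rw [hw η hη, integral_undef hn, neg_zero]
    have goal : ∫ x, u x * fderiv ℝ η x e = 0 := by
      by_cases hI : Integrable (fun x => w x * η x)
      · have hs : IsTest Ω (fun x => η0 x + η x) := by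
          refine ⟨h0.1.add hη.1, h0.2.1.add hη.2.1, ?_⟩
          exact (tsupport_add η0 η).trans (union_subset h0.2.2 hη.2.2)
        have h1 := hz _ hs (fun hc => hni (by
          refine (hc.sub hI).congr (Eventually.of_forall fun x => ?_)
          simp only [Pi.sub_apply]
          ring))
        have h2 : ∀ x, u x * fderiv ℝ (fun x => η0 x + η x) x e =
            u x * fderiv ℝ η0 x e + u x * fderiv ℝ η x e := fun x => by
          rw [fderiv_fun_add (h0.1.differentiable (by simp) x) (hη.1.differentiable (by simp) x)]
          simp [mul_add]
        simp_rw [h2] at h1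
        rw [integral_add (hint _ h0) (hint _ hη), hz _ h0 hni, zero_add] at h1
        exact h1
      · exact hz η hη hI
    rw [goal]; simp

lemma null_part {n : ℕ} (hn : 1 ≤ n) (Ω : Set (En n)) (hΩ : IsOpen Ω) (g : En n → En n)
    (hgm : AEStronglyMeasurable g volume)
    (d : Fin n → Fin n → En n → ℝ)
    (hw : ∀ i j, HasWeakPartialOn Ω (fun x => g x i) (d i j) (EuclideanSpace.single j 1))
    (hg : ∀ K ⊆ Ω, IsCompact K → IntegrableOn g K)
    (hd : ∀ i j (p : En n) (R R' : ℝ), 0 < R → R < R' → closedBall p R' ⊆ Ω →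
      IntegrableOn (d i j) (closedBall p R))
    (C : ℕ → Set (En n))
    (hC : ∀ k : ℕ, C k = {x | x ∈ Kset Ω k (3 * (1 / (k + 1))) ∧
      ∀ r, 0 < r → r ≤ 1 / ((k : ℝ) + 1) → (∫⁻ y in ball x r, ‖g y‖ₑ) ≤ k * volume (ball x r)}) :
    μH[(n : ℝ) - 1] (Ω \ ⋃ k, C k) = 0 := by
  refine measure_null_of_locally_null _ fun p hp => ?_
  obtain ⟨ε, hε, hεΩ⟩ := Metric.isOpen_iff.1 hΩ p hp.1
  set ρ := ε / 3 with hρ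
  have hρ0 : 0 < ρ := by positivity
  have hcb : closedBall p (2 * ρ) ⊆ Ω := (closedBall_subset_ball (by linarith)).trans hεΩ
  have hgi : ∀ i, IntegrableOn (fun x => g x i) (closedBall p (2 * ρ)) := fun i =>
    (EuclideanSpace.proj (𝕜 := ℝ) i : En n →L[ℝ] ℝ).integrable_comp
      (hg _ hcb (isCompact_closedBall _ _))
  choose F G hF hFc hG hFG hFe hGe using fun i => cutoff Ω p ρ hρ0 hcb (fun x => g x i)
    (d i) (hgi i) (fun j => hd i j p (2 * ρ) (5 / 2 * ρ) (by linarith) (by linarith)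
      ((closedBall_subset_ball (by linarith)).trans hεΩ)) (hw i)
  refine ⟨(Ω \ ⋃ k, C k) ∩ ball p (ρ / 2), inter_mem self_mem_nhdsWithin
    (mem_nhdsWithin_of_mem_nhds (ball_mem_nhds _ (by positivity))), ?_⟩
  refine measure_mono_null ?_ (measure_iUnion_null fun i =>
    null_unbounded hn (F i) (G i) (hF i) (hFc i) (hG i) (hFG i))
  rintro x ⟨⟨hxΩ, hxC⟩, hxp⟩
  by_contra hcon
  refine hxC ?_
  simp only [mem_iUnion, mem_ofPred, not_exists] at hcon
  push Not at hcon
  choose M hM using hcon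
  obtain ⟨ε', hε', hεΩ'⟩ := Metric.isOpen_iff.1 hΩ x hxΩ
  have hlim : Tendsto (fun k : ℕ => 1 / ((k:ℝ) + 1)) atTop (𝓝 0) :=
    tendsto_one_div_add_atTop_nhds_zero_nat
  have hev : ∀ᶠ k : ℕ in atTop, ‖x‖ ≤ k ∧ ∑ i, M i ≤ k ∧ 1 / ((k:ℝ) + 1) < ε' / 3 ∧
      1 / ((k:ℝ) + 1) < ρ / 2 :=
    (tendsto_natCast_atTop_atTop.eventually_ge_atTop ‖x‖).and
      ((eventually_ge_atTop _).and ((hlim.eventually_lt_const (by positivity)).and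
        (hlim.eventually_lt_const (by positivity))))
  obtain ⟨k, hk1, hk2, hk3, hk4⟩ := hev.exists
  refine mem_iUnion.2 ⟨k, ?_⟩
  rw [hC k]
  refine ⟨⟨hk1, fun y hy => ?_⟩, fun r hr hrk => ?_⟩
  · by_contra hlt
    refine hy (hεΩ' ?_)
    rw [mem_ball, dist_comm]
    linarith
  have hsub : ball x r ⊆ ball p ρ := by
    intro z hz
    rw [mem_ball] at hz hxp ⊢
    have := dist_triangle z x p
    linarith
  have hr1 : r ≤ 1 := hrk.trans (by
    rw [div_le_one (by positivity)]
    have : (0:ℝ) ≤ k := by positivity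
    linarith)
  have hgm' : ∀ i, AEMeasurable (fun y => ‖g y i‖ₑ) (volume.restrict (ball x r)) := fun i =>
    ((EuclideanSpace.proj (𝕜 := ℝ) i : En n →L[ℝ] ℝ).continuous.comp_aestronglyMeasurable
      hgm).enorm.restrict
  calc (∫⁻ y in ball x r, ‖g y‖ₑ) ≤ ∫⁻ y in ball x r, ∑ i, ‖g y i‖ₑ :=
        lintegral_mono fun y => enorm_le_sum _
    _ = ∑ i, ∫⁻ y in ball x r, ‖g y i‖ₑ := lintegral_finsetSum' _ fun i _ => hgm' i
    _ ≤ ∑ i, (M i : ℝ≥0∞) * volume (ball x r) := by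
        refine Finset.sum_le_sum fun i _ => le_trans (le_of_eq ?_) (hM i r hr hr1)
        refine setLIntegral_congr_fun measurableSet_ball fun z hz => ?_
        simp only
        rw [hFe i z (hsub hz)]
    _ = ((∑ i, M i : ℕ) : ℝ≥0∞) * volume (ball x r) := by
        rw [← Finset.sum_mul]; push_cast; rfl
    _ ≤ _ := mul_le_mul_left (by exact_mod_cast hk2) _

theorem main_thm {n : ℕ} (Ω : Set (En n)) (hΩ : IsOpen Ω)
    (f : En n → ℝ) (g : En n → En n) (h : En n → Fin n → En n)
    (hf : MemW2pLoc 1 Ω f g h) :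
    ∃ C : ℕ → Set (En n),
      (∀ k, IsClosed (C k)) ∧ (∀ k, C k ⊆ C (k + 1)) ∧ (∀ k, C k ⊆ Ω) ∧
      (∀ k, LipschitzOnQE 1 (preciseRep f) (C k)) ∧
      μH[(n : ℝ) - 1] (Ω \ ⋃ k, C k) = 0 := by
  rcases Nat.eq_zero_or_pos n with hn | hn
  · subst hn
    refine ⟨fun _ => Ω, fun k => ?_, fun k => Subset.rfl, fun k => Subset.rfl, fun k => ?_, ?_⟩
    · exact Set.Subsingleton.isClosed (fun x _ y _ => Subsingleton.elim x y)
    · refine ⟨∅, empty_subset _, cap_empty', 0, ?_⟩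
      intro x _ y _
      rw [Subsingleton.elim x y]; simp
    · have : Ω \ ⋃ _ : ℕ, Ω = ∅ := by rw [iUnion_const]; simp
      rw [this]; exact measure_empty
  obtain ⟨hfm, hgm, hfg, hgh, hint⟩ := hf
  have hρ : ∀ k : ℕ, 0 < 1 / ((k:ℝ) + 1) := fun k => by positivity
  have hfi : ∀ K ⊆ Ω, IsCompact K → IntegrableOn f K := fun K hK hKc =>
    integrableOn_of_rpow' f hfm K (hint K hK hKc).1
  have hgi : ∀ K ⊆ Ω, IsCompact K → IntegrableOn g K := fun K hK hKc =>
    integrableOn_of_rpow g hgm K (hint K hK hKc).2.1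
  choose d hdw hdi using fun i j : Fin n => fix_partial Ω (fun x => g x i) (fun x => h x i j)
    (EuclideanSpace.single j 1) (fun K hK hKc =>
      (EuclideanSpace.proj (𝕜 := ℝ) i : En n →L[ℝ] ℝ).integrable_comp (hgi K hK hKc)) (hgh i j)
  set C : ℕ → Set (En n) := fun k => {x | x ∈ Kset Ω k (3 * (1 / (k + 1))) ∧
      ∀ r, 0 < r → r ≤ 1 / ((k : ℝ) + 1) → (∫⁻ y in ball x r, ‖g y‖ₑ) ≤ k * volume (ball x r)}
    with hC
  have hCK : ∀ k : ℕ, C k ⊆ Kset Ω k (3 * (1 / (k + 1))) := fun k x hx => hx.1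
  have hle1 : ∀ k : ℕ, 1 / ((k:ℝ) + 1) ≤ 1 := fun k => by
    rw [div_le_one (by positivity)]
    have : (0:ℝ) ≤ k := by positivity
    linarith
  have hanti : ∀ k : ℕ, 1 / (((k + 1 : ℕ) : ℝ) + 1) ≤ 1 / ((k : ℝ) + 1) := fun k => by
    refine one_div_le_one_div_of_le (by positivity) ?_
    push_cast
    linarith
  refine ⟨C, fun k => (Kset_closed _ _ _).inter (closed_avg g hgm k _), fun k x hx => ?_,
    fun k => (hCK k).trans (Kset_sub _ _ _ (by positivity)), fun k => ?_, ?_⟩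
  · refine ⟨⟨hx.1.1.trans (by push_cast; linarith), fun y hy => le_trans ?_ (hx.1.2 y hy)⟩,
      fun r hr hrk => (hx.2 r hr (hrk.trans (hanti k))).trans ?_⟩
    · linarith [hanti k]
    · exact mul_le_mul_left (by push_cast; exact le_self_add) _
  · refine ⟨∅, empty_subset _, cap_empty', ?_⟩
    obtain ⟨K, hK⟩ := lip_part Ω f g hfg hfi hgi (1 / ((k:ℝ) + 1)) k (hρ k) (hle1 k) k (C k)
      (hCK k) (fun x hx => hx.2)
    exact ⟨K, hK.mono sdiff_subset⟩
  · exact null_part hn Ω hΩ g hgm d hdw hgi hdi C (fun k => rfl)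

/-- Lipschitz approximation of `W^{2,1}_loc(Ω)` functions with exceptional set of
`(n-1)`-Hausdorff measure zero. -/
theorem lipschitz_approx_W21_hausdorff {n : ℕ} (Ω : Set (En n)) (hΩ : IsOpen Ω)
    (f : En n → ℝ) (g : En n → En n) (h : En n → Fin n → En n)
    (hf : MemW2pLoc 1 Ω f g h) :
    ∃ C : ℕ → Set (En n),
      (∀ k, IsClosed (C k)) ∧ (∀ k, C k ⊆ C (k + 1)) ∧ (∀ k, C k ⊆ Ω) ∧
      (∀ k, LipschitzOnQE 1 (preciseRep f) (C k)) ∧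
      μH[(n : ℝ) - 1] (Ω \ ⋃ k, C k) = 0 := by exact main_thm Ω hΩ f g h hf
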